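/- arXiv:2210.04622 — 3 statements merged into one kernel-verified Lean document; each statement's English description precedes it below -/
import Mathlib

section
/- The SP counting function satisfies the asymptotic formula SP(n) = (ζ(2) − 1)·n/log n + O(n/(log n)²); that is, there exist a constant C > 0 and a threshold N such that for all n ≥ N, |SP(n) − (ζ(2) − 1)·n/log n| ≤ C·n/(log n)². -/
/-!
Sorting SP numbers `p * b ^ 2` by `b` (the representation is unique, since the prime `p` is the only
one with odd exponent) gives `SPCount n = ∑ b ≥ 2, π (n / b ^ 2)`. The prime number theorem in the
form `π x = x / log x + O(x / log² x)` turns the `b`-th summand into `n / (b² log n)` with an error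
`O(n (1 + log b)² / (b² log² n))`: for `b ≤ n ^ (1/4)` this is the prime number theorem at `n / b²`,
and for larger `b` one has `log n < 4 log b`, so the trivial bound `π x ≤ x` is enough. The errors
are summable over `b`, and `∑ b ≥ 2, 1 / b² = π² / 6 - 1`.

The prime number theorem with this error term is not in Mathlib and most of the file proves it,
by a Perron-type argument on the line `Re s = 1` with no zero-free region.

* `exists_norm_riemannZeta_le`: `ζ` is `O((1 + |t|) ^ (2η))`, `η = 1/64`, on `Re s > 1 - η` away from
  the real axis, from a series for `(s - 1) ζ(s)` converging there. By Cauchy's estimate the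
  derivatives satisfy the same bound on `Re s ≥ 1` (`exists_norm_iteratedDeriv_zeta_le`).
* `exists_le_norm_zeta`: the inequality `1 ≤ |ζ(1+x)³ ζ(1+x+it)⁴ ζ(1+x+2it)|` together with the bound on
  `ζ'` yields `|ζ(s)| ≥ c (1 + |t|) ^ (-8η)` for `1 < Re s ≤ 2`.
* The Dirichlet series of `a n = (Λ n - 1) log² n` is the second derivative of `-ζ'/ζ - ζ`, which has no
  pole at `1`; the two estimates above make it `O((1 + |t|) ^ (1/2))` uniformly in `1 < Re s ≤ 2`
  (`exists_norm_LSeries_a_le`).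
* Mellin inversion with the kernel `1 / (s (s + 1))` and `Re s → 1` give
  `∑ n < N, a n (N - n) = O(N²)` (`exists_riesz_le`). Since `a n` carries the weight `log² n`,
  this saves two logarithms over the trivial bound.
* Comparing Riesz sums at distance `N / log N`, with `a n ≥ -log² n` as the one-sided Tauberian condition,
  gives `∑ n ≤ N, a n = O(N log N)` (`exists_sum_a_le`). Removing the weight `log² n` yields
  `ψ N - N = O(N / log N)`, and Mathlib's Chebyshev estimates pass from `ψ` to `π`
  (`exists_primeCounting_sub_le`).
-/

/-- A natural number is an SP number if it equals `p * a ^ 2` for a prime `p`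
and a natural number `a ≥ 2`. -/
def IsSP (n : ℕ) : Prop := ∃ p a : ℕ, p.Prime ∧ 2 ≤ a ∧ n = p * a ^ 2

open scoped Classical in
/-- `SPCount n` is the number of SP numbers less than or equal to `n`. -/
noncomputable def SPCount (n : ℕ) : ℕ := ((Finset.range (n + 1)).filter IsSP).card

/-! ### Growth of the zeta function left of the line `Re s = 1` -/

namespace SPProof
open Complex Filter Topology

/-- `q n s = (s - 1) ∫ x in m..m+1, (m⁻ˢ - x⁻ˢ)` with `m = n + 1`, evaluated in closed form. The sum of
these over `n` is `(s - 1) ζ(s) - 1`, and it converges for `0 < Re s`. -/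
noncomputable def q (n : ℕ) (s : ℂ) : ℂ :=
  (s - 1) * ((n + 1 : ℕ) : ℂ) ^ (-s) + ((n + 2 : ℕ) : ℂ) ^ (1 - s) - ((n + 1 : ℕ) : ℂ) ^ (1 - s)

lemma differentiable_q (n : ℕ) : Differentiable ℂ (q n) := by
  have h1 : ((n + 1 : ℕ) : ℂ) ≠ 0 := by exact_mod_cast Nat.succ_ne_zero n
  have h2 : ((n + 2 : ℕ) : ℂ) ≠ 0 := by exact_mod_cast Nat.succ_ne_zero (n+1)
  unfold q
  intro s
  refine DifferentiableAt.sub (DifferentiableAt.add (DifferentiableAt.mul (by fun_prop) ?_) ?_) ?_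
  · exact DifferentiableAt.const_cpow (by fun_prop) (Or.inl h1)
  · exact DifferentiableAt.const_cpow (by fun_prop) (Or.inl h2)
  · exact DifferentiableAt.const_cpow (by fun_prop) (Or.inl h1)

lemma norm_cpow_sub_le_norm_mul {m u : ℝ} (hm : 0 < m) (hu : m ≤ u) (hu' : u ≤ m + 1) {s : ℂ}
    (hs : 0 < s.re) :
    ‖(m : ℂ) ^ (-s) - (u : ℂ) ^ (-s)‖ ≤ ‖s‖ * m ^ (-s.re - 1) := by
  have hd : ∀ x ∈ Set.Icc m u,
      HasDerivWithinAt (fun y : ℝ => (y : ℂ) ^ (-s)) (-s * (x : ℂ) ^ (-s - 1)) (Set.Icc m u) x := by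
    intro x hx
    have hx0 : x ≠ 0 := by linarith [hx.1]
    have hs0 : -s ≠ 0 := by
      intro h; rw [neg_eq_zero] at h; simp [h] at hs
    exact (hasDerivAt_ofReal_cpow_const hx0 (r := -s) hs0 |>.hasDerivWithinAt)
  have hb : ∀ x ∈ Set.Icc m u, ‖-s * (x : ℂ) ^ (-s - 1)‖ ≤ ‖s‖ * m ^ (-s.re - 1) := by
    intro x hx
    have hx0 : 0 < x := by linarith [hx.1]
    rw [norm_mul, norm_neg, norm_cpow_eq_rpow_re_of_pos hx0]
    gcongr
    simp only [sub_re, neg_re, one_re]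
    exact Real.rpow_le_rpow_of_nonpos hm hx.1 (by linarith)
  have := (convex_Icc m u).norm_image_sub_le_of_norm_hasDerivWithin_le hd hb
    (Set.left_mem_Icc.2 hu) (Set.right_mem_Icc.2 hu)
  rw [norm_sub_rev]
  refine this.trans ?_
  have h1 : ‖u - m‖ ≤ 1 := by rw [Real.norm_eq_abs, abs_le]; constructor <;> linarith
  calc _ ≤ ‖s‖ * m ^ (-s.re - 1) * 1 := by gcongr
    _ = _ := mul_one _

/-- Interpolation, with exponent `a`, between the mean value bound `norm_cpow_sub_le_norm_mul` and the
trivial bound `2 * m ^ (-s.re)`. -/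
lemma norm_cpow_sub_le {m u : ℝ} (hm : 0 < m) (hu : m ≤ u) (hu' : u ≤ m + 1) {s : ℂ}
    (hs : 0 < s.re) {a : ℝ} (ha : 0 ≤ a) (ha1 : a ≤ 1) :
    ‖(m : ℂ) ^ (-s) - (u : ℂ) ^ (-s)‖ ≤ 2 * ‖s‖ ^ a * m ^ (-s.re - a) := by
  have h1 := norm_cpow_sub_le_norm_mul hm hu hu' hs
  have h2 : ‖(m : ℂ) ^ (-s) - (u : ℂ) ^ (-s)‖ ≤ 2 * m ^ (-s.re) := by
    refine (norm_sub_le _ _).trans ?_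
    rw [norm_cpow_eq_rpow_re_of_pos hm, norm_cpow_eq_rpow_re_of_pos (hm.trans_le hu)]
    simp only [neg_re]
    have := Real.rpow_le_rpow_of_nonpos hm hu (z := -s.re) (by linarith)
    linarith
  set X := ‖(m : ℂ) ^ (-s) - (u : ℂ) ^ (-s)‖
  have hX : 0 ≤ X := norm_nonneg _
  have e : X = X ^ (1 - a) * X ^ a := by
    rw [← Real.rpow_add' hX (by norm_num)]; norm_num
  have hm1 : 0 ≤ m ^ (-s.re) := (Real.rpow_pos_of_pos hm _).le
  have hm2 : 0 ≤ m ^ (-s.re - 1) := (Real.rpow_pos_of_pos hm _).le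
  calc X = X ^ (1 - a) * X ^ a := e
    _ ≤ (2 * m ^ (-s.re)) ^ (1 - a) * (‖s‖ * m ^ (-s.re - 1)) ^ a := by
        gcongr
    _ = 2 ^ (1 - a) * ‖s‖ ^ a * m ^ (-s.re - a) := by
        rw [Real.mul_rpow (by norm_num) hm1, Real.mul_rpow (norm_nonneg _) hm2,
          ← Real.rpow_mul hm.le, ← Real.rpow_mul hm.le]
        have : m ^ (-s.re - a) = m ^ (-s.re * (1 - a)) * m ^ ((-s.re - 1) * a) := by
          rw [← Real.rpow_add hm]; congr 1; ring
        rw [this]; ring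
    _ ≤ 2 * ‖s‖ ^ a * m ^ (-s.re - a) := by
        have : (2:ℝ) ^ (1 - a) ≤ 2 ^ (1:ℝ) :=
          Real.rpow_le_rpow_of_exponent_le (by norm_num) (by linarith)
        rw [Real.rpow_one] at this
        have : 0 ≤ m ^ (-s.re - a) := (Real.rpow_pos_of_pos hm _).le
        gcongr

lemma norm_q_le (n : ℕ) {s : ℂ} (hs : 0 < s.re) {a : ℝ} (ha : 0 ≤ a) (ha1 : a ≤ 1) :
    ‖q n s‖ ≤ ‖s - 1‖ * (2 * ‖s‖ ^ a * ((n + 1 : ℕ) : ℝ) ^ (-s.re - a)) := by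
  set m : ℝ := ((n + 1 : ℕ) : ℝ) with hm_def
  have hm : 0 < m := by positivity
  by_cases hs1 : s = 1
  · subst hs1; simp [q]
  have hd : ∀ x ∈ Set.Icc m (m + 1),
      HasDerivWithinAt (fun y : ℝ => (s - 1) * (m : ℂ) ^ (-s) * y + (y : ℂ) ^ (1 - s))
        ((s - 1) * ((m : ℂ) ^ (-s) - (x : ℂ) ^ (-s))) (Set.Icc m (m + 1)) x := by
    intro x hx
    have hx0 : x ≠ 0 := by linarith [hx.1]
    have h1 := hasDerivAt_ofReal_cpow_const hx0 (r := 1 - s) (sub_ne_zero.2 (Ne.symm hs1))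
    have h2 : HasDerivAt (fun y : ℝ => (s - 1) * (m : ℂ) ^ (-s) * y)
        ((s - 1) * (m : ℂ) ^ (-s) * 1) x := (ofRealCLM.hasDerivAt (x := x)).const_mul _
    refine ((h2.add h1).congr_deriv ?_).hasDerivWithinAt
    have : (1 - s - 1) = -s := by ring
    rw [this]; ring
  have hb : ∀ x ∈ Set.Icc m (m + 1), ‖(s - 1) * ((m : ℂ) ^ (-s) - (x : ℂ) ^ (-s))‖ ≤
      ‖s - 1‖ * (2 * ‖s‖ ^ a * m ^ (-s.re - a)) := by
    intro x hx
    rw [norm_mul]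
    gcongr
    exact norm_cpow_sub_le hm hx.1 hx.2 hs ha ha1
  have := (convex_Icc m (m + 1)).norm_image_sub_le_of_norm_hasDerivWithin_le hd hb
    (Set.left_mem_Icc.2 (by linarith)) (Set.right_mem_Icc.2 (by linarith))
  rw [add_sub_cancel_left, norm_one, mul_one] at this
  refine le_of_eq_of_le (congrArg norm ?_) this
  simp only [q, hm_def]
  push_cast
  have : (n : ℂ) + 2 = n + 1 + 1 := by ring
  rw [this]
  ring

/-- The width of the strip to the left of `Re s = 1` on which `ζ` is estimated. Small enough that the
fifteenth power of `(1 + |t|) ^ (2 * η)` stays below `(1 + |t|) ^ (1 / 2)`. -/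
noncomputable def η : ℝ := 1 / 64

lemma norm_q_le' (n : ℕ) {s : ℂ} (hs : 1 - η ≤ s.re) :
    ‖q n s‖ ≤ ‖s - 1‖ * (2 * ‖s‖ ^ (2 * η)) * (1 / ((n + 1 : ℕ) : ℝ) ^ (1 + η)) := by
  have hη : η = 1 / 64 := rfl
  refine (norm_q_le n (by linarith) (a := 2 * η) (by linarith) (by linarith)).trans ?_
  rw [one_div, ← Real.rpow_neg (by positivity), ← mul_assoc]
  gcongr
  · simp
  · linarith

lemma summable_q_bound : Summable fun n : ℕ => 1 / ((n + 1 : ℕ) : ℝ) ^ (1 + η) :=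
  (summable_nat_add_iff 1).2 (Real.summable_one_div_nat_rpow.2 (by norm_num [η]))

lemma summable_q {s : ℂ} (hs : 1 - η ≤ s.re) : Summable fun n => q n s :=
  Summable.of_norm_bounded (summable_q_bound.mul_left _) fun n => norm_q_le' n hs

lemma differentiableOn_tsum_q : DifferentiableOn ℂ (fun s => ∑' n, q n s) {s | 1 - η < s.re} := by
  intro s hs
  have hs' : 1 - η < s.re := hs
  set R := ‖s‖ + 1
  have hopen : IsOpen ({s : ℂ | 1 - η < s.re} ∩ Metric.ball 0 R) :=
    (isOpen_lt continuous_const continuous_re).inter Metric.isOpen_ball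
  have : DifferentiableOn ℂ (fun s => ∑' n, q n s) ({s : ℂ | 1 - η < s.re} ∩ Metric.ball 0 R) := by
    refine differentiableOn_tsum_of_summable_norm
      (u := fun n => ((R + 1) * (2 * R ^ (2 * η))) * (1 / ((n + 1 : ℕ) : ℝ) ^ (1 + η)))
      (summable_q_bound.mul_left _)
      (fun n => (differentiable_q n).differentiableOn) hopen ?_
    intro n w hw
    have hw1 : 1 - η < w.re := hw.1
    have hw2 : ‖w‖ < R := by simpa using hw.2
    refine (norm_q_le' n hw1.le).trans ?_
    have : ‖w - 1‖ ≤ R + 1 := (norm_sub_le _ _).trans (by simp; linarith)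
    have hη : 0 ≤ 2 * η := by norm_num [η]
    gcongr
  have hmem : s ∈ {s : ℂ | 1 - η < s.re} ∩ Metric.ball 0 R := ⟨hs, by simp [R]⟩
  exact ((this s hmem).differentiableAt (hopen.mem_nhds hmem)).differentiableWithinAt

lemma sum_q (N : ℕ) (s : ℂ) : ∑ n ∈ Finset.range N, q n s =
    (s - 1) * ∑ n ∈ Finset.range N, 1 / ((n : ℂ) + 1) ^ s + ((N + 1 : ℕ) : ℂ) ^ (1 - s) - 1 := by
  induction N with
  | zero => simp
  | succ N ih =>
    rw [Finset.sum_range_succ, ih, Finset.sum_range_succ, q, cpow_neg]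
    push_cast
    have : (N : ℂ) + 2 = N + 1 + 1 := by ring
    rw [this]
    ring

/-- Here `riemannZeta₁ s` is Mathlib's entire function `(s - 1) ζ(s)`. -/
lemma riemannZeta₁_eq_of_one_lt {s : ℂ} (hs : 1 < s.re) : riemannZeta₁ s = 1 + ∑' n, q n s := by
  have hs1 : s ≠ 1 := by rintro rfl; simp at hs
  have h1 : Tendsto (fun N => ∑ n ∈ Finset.range N, q n s) atTop (𝓝 (∑' n, q n s)) :=
    (summable_q (by linarith [show η = 1 / 64 from rfl])).hasSum.tendsto_sum_nat
  have hz : HasSum (fun n : ℕ => 1 / ((n : ℂ) + 1) ^ s) (riemannZeta s) := by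
    rw [zeta_eq_tsum_one_div_nat_add_one_cpow hs]
    refine Summable.hasSum ?_
    have := (summable_nat_add_iff 1).2 (Complex.summable_one_div_nat_cpow.2 hs)
    simpa using this
  have h0 : Tendsto (fun N : ℕ => ((N + 1 : ℕ) : ℂ) ^ (1 - s)) atTop (𝓝 0) := by
    rw [tendsto_zero_iff_norm_tendsto_zero]
    have h : ∀ N : ℕ, ‖((N + 1 : ℕ) : ℂ) ^ (1 - s)‖ = ((N + 1 : ℕ) : ℝ) ^ (-(s.re - 1)) := by
      intro N
      rw [norm_natCast_cpow_of_pos (Nat.succ_pos N)]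
      congr 1; simp
    simp_rw [h]
    exact (tendsto_rpow_neg_atTop (by linarith)).comp
      (tendsto_natCast_atTop_atTop.comp (tendsto_add_atTop_nat 1))
  have h2 : Tendsto (fun N => ∑ n ∈ Finset.range N, q n s) atTop
      (𝓝 ((s - 1) * riemannZeta s + 0 - 1)) := by
    simp_rw [sum_q]
    exact ((hz.tendsto_sum_nat.const_mul _).add h0).sub_const 1
  rw [tendsto_nhds_unique h1 h2, riemannZeta_eq_inv_sub_mul hs1]
  have := sub_ne_zero.2 hs1
  field_simp
  ring

lemma riemannZeta₁_eq {s : ℂ} (hs : 1 - η < s.re) : riemannZeta₁ s = 1 + ∑' n, q n s := by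
  have hopen : IsOpen {s : ℂ | 1 - η < s.re} := isOpen_lt continuous_const continuous_re
  have hf : AnalyticOnNhd ℂ riemannZeta₁ {s : ℂ | 1 - η < s.re} :=
    differentiable_riemannZeta₁.differentiableOn.analyticOnNhd hopen
  have hg : AnalyticOnNhd ℂ (fun s => 1 + ∑' n, q n s) {s : ℂ | 1 - η < s.re} :=
    (differentiableOn_tsum_q.const_add 1).analyticOnNhd hopen
  have hη : η = 1 / 64 := rfl
  refine hf.eqOn_of_preconnected_of_eventuallyEq hg (convex_halfSpace_re_gt _).isPreconnected
    (z₀ := 2) (by simp; linarith) ?_ hs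
  filter_upwards [(isOpen_lt continuous_const continuous_re).mem_nhds
    (show (2 : ℂ) ∈ {s : ℂ | 1 < s.re} by simp)] with w hw
  exact riemannZeta₁_eq_of_one_lt hw

/-- Growth of the zeta function slightly to the left of `Re s = 1`. By `norm_q_le'` each term of the
series for `(s - 1) ζ(s)` carries the factor `‖s - 1‖`, which cancels. -/
lemma exists_norm_riemannZeta_le : ∃ C : ℝ, 0 < C ∧ ∀ s : ℂ, 1 - η < s.re → s.re ≤ 3 →
    1 ≤ |s.im| → ‖riemannZeta s‖ ≤ C * (1 + |s.im|) ^ (2 * η) := by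
  set Z := ∑' n : ℕ, 1 / ((n + 1 : ℕ) : ℝ) ^ (1 + η) with hZ
  have hZ0 : 0 ≤ Z := tsum_nonneg fun n => by positivity
  have hη : η = 1 / 64 := rfl
  refine ⟨1 + 6 * Z, by positivity, fun s h1 h2 h3 => ?_⟩
  have hs1 : s ≠ 1 := by rintro rfl; simp at h3; linarith
  have hs0 := sub_ne_zero.2 hs1
  have hn : 1 ≤ ‖s - 1‖ := by
    have := abs_im_le_norm (s - 1); simp at this; linarith
  have hsum : ‖∑' n, q n s‖ ≤ ‖s - 1‖ * (2 * ‖s‖ ^ (2 * η)) * Z :=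
    tsum_of_norm_bounded (summable_q_bound.hasSum.mul_left _) fun n => norm_q_le' n h1.le
  have hs : ‖s‖ ≤ 3 * (1 + |s.im|) := by
    have := norm_le_abs_re_add_abs_im s
    rw [abs_of_pos (by linarith : 0 < s.re)] at this
    linarith [abs_nonneg s.im]
  have hK : 1 ≤ (1 + |s.im|) ^ (2 * η) := Real.one_le_rpow (by linarith) (by linarith)
  have hs' : ‖s‖ ^ (2 * η) ≤ 3 * (1 + |s.im|) ^ (2 * η) := by
    calc ‖s‖ ^ (2 * η) ≤ (3 * (1 + |s.im|)) ^ (2 * η) := by gcongr; linarith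
      _ = 3 ^ (2 * η) * (1 + |s.im|) ^ (2 * η) :=
          Real.mul_rpow (by norm_num) (by positivity)
      _ ≤ _ := by
        gcongr
        calc (3:ℝ) ^ (2 * η) ≤ 3 ^ (1:ℝ) :=
              Real.rpow_le_rpow_of_exponent_le (by norm_num) (by linarith)
          _ = 3 := Real.rpow_one _
  rw [riemannZeta_eq_inv_sub_mul hs1, riemannZeta₁_eq h1, norm_mul, norm_inv,
    inv_mul_le_iff₀ (by linarith)]
  calc ‖1 + ∑' n, q n s‖ ≤ 1 + ‖s - 1‖ * (2 * ‖s‖ ^ (2 * η)) * Z :=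
        (norm_add_le _ _).trans (by rw [norm_one]; gcongr)
    _ ≤ ‖s - 1‖ * (1 + |s.im|) ^ (2 * η) + ‖s - 1‖ * (2 * (3 * (1 + |s.im|) ^ (2 * η))) * Z := by
        gcongr
        nlinarith
    _ = _ := by ring

end SPProof

/-! ### Derivatives and lower bounds on `Re s ≥ 1` -/

namespace SPProof
open Complex Filter Topology

/-- The common majorant, up to constants, of `ζ` and its derivatives at height `t` on
`1 ≤ Re s ≤ 2`. -/
noncomputable def K (t : ℝ) : ℝ := (1 + |t|) ^ (2 * η)

lemma one_le_K (t : ℝ) : 1 ≤ K t :=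
  Real.one_le_rpow (by linarith [abs_nonneg t]) (by norm_num [η])

lemma K_le_two_mul {t u : ℝ} (h : |u| ≤ 1 + 2 * |t|) : K u ≤ 2 * K t := by
  have h0 := abs_nonneg t
  have h1 := abs_nonneg u
  have hη : 0 ≤ 2 * η := by norm_num [η]
  calc K u ≤ (2 * (1 + |t|)) ^ (2 * η) := by unfold K; gcongr; linarith
    _ = 2 ^ (2 * η) * K t := Real.mul_rpow (by norm_num) (by positivity)
    _ ≤ 2 * K t := by
      have := one_le_K t
      gcongr
      calc (2:ℝ) ^ (2 * η) ≤ 2 ^ (1:ℝ) :=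
            Real.rpow_le_rpow_of_exponent_le (by norm_num) (by norm_num [η])
        _ = 2 := Real.rpow_one _

/-- Cauchy's estimate on the circle of radius `η / 2` about `s`. -/
lemma exists_norm_iteratedDeriv_zeta_le (k : ℕ) : ∃ C : ℝ, 1 ≤ C ∧ ∀ s : ℂ, 1 ≤ s.re → s.re ≤ 2 →
    2 ≤ |s.im| → ‖iteratedDeriv k riemannZeta s‖ ≤ C * K s.im := by
  obtain ⟨C, hC, h⟩ := exists_norm_riemannZeta_le
  have hη : η = 1 / 64 := rfl
  refine ⟨max 1 (k.factorial * (C * 2) / (η / 2) ^ k), le_max_left _ _, fun s h1 h2 h3 => ?_⟩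
  have hne : ∀ z ∈ Metric.closedBall s (η / 2),
      1 - η < z.re ∧ z.re ≤ 3 ∧ 1 ≤ |z.im| ∧ |z.im| ≤ 1 + 2 * |s.im| := by
    intro z hz
    have hz' : ‖z - s‖ ≤ η / 2 := by simpa [dist_eq_norm] using hz
    have hre := (abs_re_le_norm (z - s)).trans hz'
    have him := (abs_im_le_norm (z - s)).trans hz'
    rw [sub_re, abs_le] at hre
    rw [sub_im] at him
    have e1 := abs_sub_abs_le_abs_sub z.im s.im
    have e2 := abs_sub_abs_le_abs_sub s.im z.im
    rw [abs_sub_comm] at e2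
    refine ⟨by linarith [hre.1], by linarith [hre.2], by linarith, by linarith⟩
  have hd : DiffContOnCl ℂ riemannZeta (Metric.ball s (η / 2)) := by
    refine DifferentiableOn.diffContOnCl fun z hz => ?_
    rw [closure_ball _ (by rw [hη]; norm_num)] at hz
    refine (differentiableAt_riemannZeta ?_).differentiableWithinAt
    rintro rfl
    have := (hne 1 hz).2.2.1
    simp at this
    linarith
  have := norm_iteratedDeriv_le_of_forall_mem_sphere_norm_le k (C := C * (2 * K s.im))
    (by rw [hη]; norm_num) hd fun z hz => by
      obtain ⟨a1, a2, a3, a4⟩ := hne z (Metric.sphere_subset_closedBall hz)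
      exact (h z a1 a2 a3).trans (by gcongr; exact K_le_two_mul a4)
  refine this.trans ?_
  have hK := one_le_K s.im
  calc _ = (k.factorial * (C * 2) / (η / 2) ^ k) * K s.im := by ring
    _ ≤ _ := by gcongr; exact le_max_right _ _

lemma exists_norm_zeta_one_add_le : ∃ A : ℝ, 1 ≤ A ∧ ∀ x : ℝ, 0 < x → x ≤ 1 →
    ‖riemannZeta (1 + x)‖ ≤ A / x := by
  obtain ⟨C, hC⟩ := (isCompact_Icc (a := (0:ℝ)) (b := 1)).exists_bound_of_continuousOn
    (f := fun x : ℝ => riemannZeta₀ (1 + x))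
    (differentiable_riemannZeta₀.continuous.comp (by fun_prop)).continuousOn
  have hC0 : 0 ≤ C := (norm_nonneg _).trans (hC 0 (by simp))
  refine ⟨1 + C, by linarith, fun x hx hx1 => ?_⟩
  have hne : (1 : ℂ) + x ≠ 1 := by simpa using hx.ne'
  rw [riemannZeta_eq_inv_sub_add hne]
  refine (norm_add_le _ _).trans ?_
  have := hC x ⟨hx.le, hx1⟩
  rw [add_sub_cancel_left, norm_inv, norm_real, Real.norm_of_nonneg hx.le, add_div, one_div]
  gcongr
  refine this.trans ?_
  rw [le_div_iff₀ hx]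
  nlinarith

lemma one_le_zeta_product {x : ℝ} (hx : 0 < x) (t : ℝ) :
    1 ≤ ‖riemannZeta (1 + x)‖ ^ 3 * ‖riemannZeta (1 + x + I * t)‖ ^ 4 *
      ‖riemannZeta (1 + x + 2 * I * t)‖ := by
  have := DirichletCharacter.norm_LFunction_product_ge_one (1 : DirichletCharacter ℂ 1) hx t
  simpa [DirichletCharacter.LFunctionTrivChar, DirichletCharacter.LFunction_modOne_eq] using this

/-- For `Re s ≥ 1 + d`, with `d` a small multiple of `K t ^ (-5)`, the lower bound comes from
`one_le_zeta_product`. Closer to the line, `ζ` differs from its value at `Re s = 1 + d` by at most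
`d` times the bound for `ζ'`, and `d` is chosen so that this is half of the lower bound there. -/
lemma exists_le_norm_zeta : ∃ c : ℝ, 0 < c ∧ ∀ s : ℂ, 1 < s.re → s.re ≤ 2 →
    2 ≤ |s.im| → c / K s.im ^ 4 ≤ ‖riemannZeta s‖ := by
  obtain ⟨A, hA, hA'⟩ := exists_norm_zeta_one_add_le
  obtain ⟨B, hB, hB'⟩ := exists_norm_iteratedDeriv_zeta_le 0
  obtain ⟨B₁, hB₁, hB₁'⟩ := exists_norm_iteratedDeriv_zeta_le 1
  simp only [iteratedDeriv_zero] at hB'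
  simp only [iteratedDeriv_one] at hB₁'
  refine ⟨1 / (32 * A ^ 3 * B * B₁ ^ 3), by positivity, fun s h1 h2 h3 => ?_⟩
  set t := s.im with ht
  have hK := one_le_K t
  have hK0 : 0 < K t := by linarith
  set d : ℝ := 1 / (32 * A ^ 3 * B * B₁ ^ 4 * K t ^ 5) with hd
  have hd0 : 0 < d := by positivity
  have hden : 1 ≤ A ^ 3 * B * B₁ ^ 4 * K t ^ 5 := by
    have a1 : 1 ≤ A ^ 3 := one_le_pow₀ hA
    have a2 : 1 ≤ B₁ ^ 4 := one_le_pow₀ hB₁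
    have a3 : 1 ≤ K t ^ 5 := one_le_pow₀ hK
    exact one_le_mul_of_one_le_of_one_le (one_le_mul_of_one_le_of_one_le
      (one_le_mul_of_one_le_of_one_le a1 hB) a2) a3
  have hd1 : d ≤ 1 := by
    rw [hd, div_le_one (by positivity)]; linarith
  have hden0 : 32 * A ^ 3 * B * B₁ ^ 4 * K t ^ 5 * d = 1 := by
    rw [hd]; field_simp
  have key : ∀ x : ℝ, d ≤ x → x ≤ 1 → 2 * (B₁ * K t * d) ≤ ‖riemannZeta (1 + x + I * t)‖ := by
    intro x hx hx1
    have hx0 : 0 < x := hd0.trans_le hx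
    by_contra! hlt
    have p := one_le_zeta_product hx0 t
    have p1 := hA' x hx0 hx1
    have p2 : ‖riemannZeta (1 + x + 2 * I * t)‖ ≤ B * (2 * K t) := by
      have := hB' (1 + x + 2 * I * t) (by simp; linarith) (by simp; linarith)
        (by simp [abs_mul]; linarith)
      refine this.trans ?_
      gcongr
      apply K_le_two_mul
      simp [abs_mul]
    have : (1:ℝ) < 1 := by
      calc (1:ℝ) ≤ _ := p
        _ ≤ (A / x) ^ 3 * ‖riemannZeta (1 + x + I * t)‖ ^ 4 * (B * (2 * K t)) := by gcongr
        _ < (A / x) ^ 3 * (2 * (B₁ * K t * d)) ^ 4 * (B * (2 * K t)) := by gcongr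
        _ ≤ (A / d) ^ 3 * (2 * (B₁ * K t * d)) ^ 4 * (B * (2 * K t)) := by gcongr
        _ = 32 * A ^ 3 * B * B₁ ^ 4 * K t ^ 5 * d := by field_simp; ring
        _ = 1 := hden0
    exact lt_irrefl _ this
  have hval : 1 / (32 * A ^ 3 * B * B₁ ^ 3) / K t ^ 4 = B₁ * K t * d := by
    rw [hd]; field_simp
  rw [hval]
  have hpos : 0 < B₁ * K t * d := by positivity
  have hs : s = 1 + ((s.re - 1 : ℝ) : ℂ) + I * t := by
    apply Complex.ext <;> simp [ht]
  by_cases hx : d ≤ s.re - 1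
  · have := key _ hx (by linarith)
    rw [← hs] at this
    linarith
  · push Not at hx
    have k1 := key d le_rfl hd1
    set w : ℂ := 1 + d + I * t with hw
    have hwre : w.re = 1 + d := by simp [hw]
    have hwim : w.im = t := by simp [hw]
    have hconv : Convex ℝ (Set.Icc s.re w.re ×ℂ {t}) :=
      ((convex_Icc _ _).linear_preimage reLm).inter ((convex_singleton _).linear_preimage imLm)
    have hmv := hconv.norm_image_sub_le_of_norm_deriv_le (f := riemannZeta) (C := B₁ * K t)
      (x := s) (y := w) ?_ ?_ ?_ ?_
    · have hnorm : ‖w - s‖ ≤ d := by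
        have : w - s = ((1 + d - s.re : ℝ) : ℂ) := by
          apply Complex.ext <;> simp [hw, ht]
        rw [this, norm_real, Real.norm_eq_abs, abs_of_nonneg (by linarith)]
        linarith
      have h5 : ‖riemannZeta w - riemannZeta s‖ ≤ B₁ * K t * d := hmv.trans (by gcongr)
      have h6 := norm_sub_norm_le (riemannZeta w) (riemannZeta s)
      linarith
    · intro z hz
      refine differentiableAt_riemannZeta ?_
      rintro rfl
      have := hz.2
      simp at this
      rw [← this] at h3
      simp at h3
      linarith
    · intro z hz
      have hz1 : z.re ∈ Set.Icc s.re w.re := hz.1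
      have hz2 : z.im = t := hz.2
      have := hB₁' z (by linarith [hz1.1]) (by linarith [hz1.2]) (by rw [hz2]; exact h3)
      rwa [hz2] at this
    · exact ⟨⟨le_rfl, by linarith⟩, rfl⟩
    · exact ⟨⟨by linarith, le_rfl⟩, hwim⟩

end SPProof

/-! ### The Dirichlet series of `(Λ(n) - 1) log² n` -/

namespace SPProof
open Complex Filter Topology

/-- The weighted error `(Λ(n) - 1) log² n`, whose Dirichlet series is `(-ζ'/ζ - ζ)''`. -/
noncomputable def a (n : ℕ) : ℝ := (ArithmeticFunction.vonMangoldt n - 1) * Real.log n ^ 2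

/-- The function `-ζ'/ζ - ζ` with its singularity at `1` removed: `-ζ'/ζ` and `ζ` both have residue `1` there,
and `riemannZeta₁ s = (s - 1) ζ(s)`, `riemannZeta₀ s = ζ(s) - 1 / (s - 1)` are entire. -/
noncomputable def W (s : ℂ) : ℂ := -(deriv riemannZeta₁ s / riemannZeta₁ s) - riemannZeta₀ s

lemma W_eq {s : ℂ} (hs : s ≠ 1) (h0 : riemannZeta s ≠ 0) :
    W s = -(deriv riemannZeta s / riemannZeta s) - riemannZeta s := by
  have hs' := sub_ne_zero.2 hs
  have h1 : riemannZeta₁ s = (s - 1) * riemannZeta s := by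
    rw [riemannZeta_eq_inv_sub_mul hs]; field_simp
  have h2 := deriv_riemannZeta_eq_neg_inv_sub_sq_mul_add hs
  have h3 : deriv riemannZeta₁ s = (s - 1) * deriv riemannZeta s + riemannZeta s := by
    rw [h2, h1]; field_simp; ring
  have h4 : riemannZeta₀ s = riemannZeta s - (s - 1)⁻¹ := by
    rw [riemannZeta_eq_inv_sub_add hs]; ring
  rw [W, h1, h3, h4]
  field_simp
  ring

lemma riemannZeta₁_ne_zero {s : ℂ} (hs : 1 ≤ s.re) : riemannZeta₁ s ≠ 0 := by
  by_cases h : s = 1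
  · simp [h]
  · have := riemannZeta_ne_zero_of_one_le_re hs
    rw [riemannZeta_eq_inv_sub_mul h] at this
    exact right_ne_zero_of_mul this

/-- Bound near the real axis, where the pole of `ζ` makes separate estimates useless. -/
lemma exists_norm_W_le_of_compact : ∃ C : ℝ, ∀ s : ℂ, 1 ≤ s.re → s.re ≤ 2 → |s.im| ≤ 2 →
    ‖deriv (deriv W) s‖ ≤ C := by
  have hU : IsOpen {s | riemannZeta₁ s ≠ 0} :=
    isOpen_ne_fun differentiable_riemannZeta₁.continuous continuous_const
  have hW : DifferentiableOn ℂ W {s | riemannZeta₁ s ≠ 0} := by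
    have h1 : Differentiable ℂ (deriv riemannZeta₁) := differentiable_riemannZeta₁.deriv
    intro s hs
    refine DifferentiableAt.differentiableWithinAt ?_
    exact ((h1 s).div (differentiable_riemannZeta₁ s) hs).neg.sub (differentiable_riemannZeta₀ s)
  have hc : IsCompact (Set.Icc (1:ℝ) 2 ×ℂ Set.Icc (-2:ℝ) 2) := isCompact_Icc.reProdIm isCompact_Icc
  obtain ⟨C, hC⟩ := hc.exists_bound_of_continuousOn
    (f := deriv (deriv W)) (((hW.deriv hU).deriv hU).continuousOn.mono
      fun s hs => riemannZeta₁_ne_zero hs.1.1)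
  exact ⟨C, fun s h1 h2 h3 => hC s ⟨⟨h1, h2⟩, abs_le.1 h3⟩⟩

lemma deriv_deriv_W {s : ℂ} (hs : 1 < s.re) :
    deriv (deriv W) s =
      -(iteratedDeriv 3 riemannZeta s / riemannZeta s
        - 3 * iteratedDeriv 1 riemannZeta s * iteratedDeriv 2 riemannZeta s / riemannZeta s ^ 2
        + 2 * iteratedDeriv 1 riemannZeta s ^ 3 / riemannZeta s ^ 3)
      - iteratedDeriv 2 riemannZeta s := by
  have hU : IsOpen {s : ℂ | 1 < s.re} := isOpen_lt continuous_const continuous_re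
  have hZ : DifferentiableOn ℂ riemannZeta {s : ℂ | 1 < s.re} := fun z hz =>
    (differentiableAt_riemannZeta (by rintro rfl; simp at hz)).differentiableWithinAt
  have hk : ∀ k, DifferentiableOn ℂ (iteratedDeriv k riemannZeta) {s : ℂ | 1 < s.re} := by
    intro k
    induction k with
    | zero => simpa using hZ
    | succ k ih => rw [iteratedDeriv_succ]; exact ih.deriv hU
  have hdk : ∀ k, ∀ z : ℂ, 1 < z.re → HasDerivAt (iteratedDeriv k riemannZeta)
      (iteratedDeriv (k + 1) riemannZeta z) z := by
    intro k z hz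
    rw [iteratedDeriv_succ]
    exact ((hk k z hz).differentiableAt (hU.mem_nhds hz)).hasDerivAt
  have hd0 : ∀ z : ℂ, 1 < z.re → HasDerivAt riemannZeta (iteratedDeriv 1 riemannZeta z) z := by
    intro z hz
    simpa using hdk 0 z hz
  have hne : ∀ z : ℂ, 1 < z.re → riemannZeta z ≠ 0 := fun z hz =>
    riemannZeta_ne_zero_of_one_le_re hz.le
  have e1 : ∀ z : ℂ, 1 < z.re →
      W z = -(iteratedDeriv 1 riemannZeta z / riemannZeta z) - riemannZeta z := by
    intro z hz
    rw [iteratedDeriv_one]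
    exact W_eq (by rintro rfl; simp at hz) (hne z hz)
  have e2 : ∀ z : ℂ, 1 < z.re → deriv W z =
      -((iteratedDeriv 2 riemannZeta z * riemannZeta z
        - iteratedDeriv 1 riemannZeta z * iteratedDeriv 1 riemannZeta z) / riemannZeta z ^ 2)
        - iteratedDeriv 1 riemannZeta z := by
    intro z hz
    have : W =ᶠ[𝓝 z] fun z => -(iteratedDeriv 1 riemannZeta z / riemannZeta z) - riemannZeta z := by
      filter_upwards [hU.mem_nhds hz] with w hw using e1 w hw
    rw [this.deriv_eq]
    exact (((hdk 1 z hz).fun_div (hd0 z hz) (hne z hz)).neg.sub (hd0 z hz)).deriv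
  have : deriv W =ᶠ[𝓝 s] fun z => -((iteratedDeriv 2 riemannZeta z * riemannZeta z
        - iteratedDeriv 1 riemannZeta z * iteratedDeriv 1 riemannZeta z) / riemannZeta z ^ 2)
        - iteratedDeriv 1 riemannZeta z := by
    filter_upwards [hU.mem_nhds hs] with w hw using e2 w hw
  rw [this.deriv_eq]
  have h0 := hne s hs
  have h := (((((hdk 2 s hs).fun_mul (hd0 s hs)).fun_sub ((hdk 1 s hs).fun_mul (hdk 1 s hs))).fun_div
    ((hd0 s hs).fun_pow 2) (pow_ne_zero 2 h0)).fun_neg.fun_sub (hdk 1 s hs))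
  rw [h.deriv]
  push_cast
  field_simp
  ring

lemma exists_norm_deriv_deriv_W_le : ∃ C : ℝ, 0 < C ∧ ∀ s : ℂ, 1 < s.re → s.re ≤ 2 →
    ‖deriv (deriv W) s‖ ≤ C * (1 + |s.im|) ^ (1 / 2 : ℝ) := by
  obtain ⟨C₀, hC₀⟩ := exists_norm_W_le_of_compact
  obtain ⟨c, hc, hz⟩ := exists_le_norm_zeta
  obtain ⟨M₁, hM₁, h1'⟩ := exists_norm_iteratedDeriv_zeta_le 1
  obtain ⟨M₂, hM₂, h2'⟩ := exists_norm_iteratedDeriv_zeta_le 2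
  obtain ⟨M₃, hM₃, h3'⟩ := exists_norm_iteratedDeriv_zeta_le 3
  refine ⟨max C₀ (M₃ / c + 3 * M₁ * M₂ / c ^ 2 + 2 * M₁ ^ 3 / c ^ 3 + M₂),
    lt_max_of_lt_right (by positivity), fun s hs1 hs2 => ?_⟩
  have hroot : 1 ≤ (1 + |s.im|) ^ (1 / 2 : ℝ) :=
    Real.one_le_rpow (by linarith [abs_nonneg s.im]) (by norm_num)
  by_cases him : |s.im| ≤ 2
  · have := hC₀ s hs1.le hs2 him
    have h0 : 0 ≤ C₀ := (norm_nonneg _).trans this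
    calc _ ≤ C₀ * 1 := by linarith
      _ ≤ _ := by gcongr; exact le_max_left _ _
  push Not at him
  set k := K s.im with hk
  have hk1 : 1 ≤ k := one_le_K _
  -- `15 = 3 * (1 + 4)`: the worst term of the second derivative is `(ζ' / ζ) ^ 3`
  have hk15 : k ^ 15 ≤ (1 + |s.im|) ^ (1 / 2 : ℝ) := by
    rw [hk, K, ← Real.rpow_natCast, ← Real.rpow_mul (by positivity)]
    exact Real.rpow_le_rpow_of_exponent_le (by linarith [abs_nonneg s.im]) (by norm_num [η])
  have l0 := hz s hs1 hs2 him.le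
  have b1 := h1' s hs1.le hs2 him.le
  have b2 := h2' s hs1.le hs2 him.le
  have b3 := h3' s hs1.le hs2 him.le
  rw [← hk] at l0 b1 b2 b3
  have hc0 : 0 < c / k ^ 4 := by positivity
  have hp : ∀ j : ℕ, j ≤ 15 → k ^ j ≤ k ^ 15 := fun j hj => pow_le_pow_right₀ hk1 hj
  rw [deriv_deriv_W hs1]
  calc _ ≤ ‖iteratedDeriv 3 riemannZeta s‖ / ‖riemannZeta s‖
        + 3 * ‖iteratedDeriv 1 riemannZeta s‖ * ‖iteratedDeriv 2 riemannZeta s‖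
          / ‖riemannZeta s‖ ^ 2
        + 2 * ‖iteratedDeriv 1 riemannZeta s‖ ^ 3 / ‖riemannZeta s‖ ^ 3
        + ‖iteratedDeriv 2 riemannZeta s‖ := by
        refine (norm_sub_le _ _).trans ?_
        rw [norm_neg]
        gcongr
        refine (norm_add_le _ _).trans ?_
        refine add_le_add ((norm_sub_le _ _).trans ?_) ?_
        · simp
        · simp
    _ ≤ (M₃ * k) / (c / k ^ 4) + 3 * (M₁ * k) * (M₂ * k) / (c / k ^ 4) ^ 2
        + 2 * (M₁ * k) ^ 3 / (c / k ^ 4) ^ 3 + M₂ * k := by gcongr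
    _ = M₃ / c * k ^ 5 + 3 * M₁ * M₂ / c ^ 2 * k ^ 10 + 2 * M₁ ^ 3 / c ^ 3 * k ^ 15
        + M₂ * k ^ 1 := by field_simp
    _ ≤ M₃ / c * k ^ 15 + 3 * M₁ * M₂ / c ^ 2 * k ^ 15 + 2 * M₁ ^ 3 / c ^ 3 * k ^ 15
        + M₂ * k ^ 15 := by
        gcongr <;> first | exact hk1 | norm_num
    _ = (M₃ / c + 3 * M₁ * M₂ / c ^ 2 + 2 * M₁ ^ 3 / c ^ 3 + M₂) * k ^ 15 := by ring
    _ ≤ _ := by gcongr; exact le_max_right _ _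

lemma abscissa_le : LSeries.abscissaOfAbsConv
    ((fun n => (ArithmeticFunction.vonMangoldt n : ℂ)) - 1) ≤ 1 := by
  refine LSeries.abscissaOfAbsConv_le_of_forall_lt_LSeriesSummable (x := 1) fun y hy => ?_
  have hy' : 1 < (y : ℂ).re := by simpa using hy
  exact (ArithmeticFunction.LSeriesSummable_vonMangoldt hy').sub (LSeriesSummable_one_iff.2 hy')

lemma a_eq_logMul (n : ℕ) : (a n : ℂ) =
    LSeries.logMul^[2] ((fun n => (ArithmeticFunction.vonMangoldt n : ℂ)) - 1) n := by
  simp [a, LSeries.logMul, natCast_log]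
  ring

lemma LSeriesSummable_a {s : ℂ} (hs : 1 < s.re) : LSeriesSummable (fun n => (a n : ℂ)) s := by
  have : (fun n => (a n : ℂ)) = LSeries.logMul^[2]
    ((fun n => (ArithmeticFunction.vonMangoldt n : ℂ)) - 1) := funext a_eq_logMul
  rw [this]
  refine LSeriesSummable_of_abscissaOfAbsConv_lt_re ?_
  rw [LSeries.absicssaOfAbsConv_logPowMul]
  exact abscissa_le.trans_lt (by exact_mod_cast hs)

lemma LSeries_a_eq {s : ℂ} (hs : 1 < s.re) :
    LSeries (fun n => (a n : ℂ)) s = deriv (deriv W) s := by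
  have : (fun n => (a n : ℂ)) = LSeries.logMul^[2]
    ((fun n => (ArithmeticFunction.vonMangoldt n : ℂ)) - 1) := funext a_eq_logMul
  have h := LSeries_iteratedDeriv (f := (fun n => (ArithmeticFunction.vonMangoldt n : ℂ)) - 1) 2
    (s := s) (abscissa_le.trans_lt (by exact_mod_cast hs))
  have e : deriv (deriv W) = iteratedDeriv 2 W := by rw [iteratedDeriv_succ, iteratedDeriv_one]
  rw [this, ← one_mul (LSeries _ s), show (1 : ℂ) = (-1) ^ 2 by norm_num, ← h, e]
  refine Filter.EventuallyEq.iteratedDeriv_eq 2 ?_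
  filter_upwards [(isOpen_lt continuous_const continuous_re).mem_nhds
    (show s ∈ {s : ℂ | 1 < s.re} from hs)] with z hz
  have hz' : 1 < z.re := hz
  rw [LSeries_sub (ArithmeticFunction.LSeriesSummable_vonMangoldt hz')
    (LSeriesSummable_one_iff.2 hz'), LSeries_one_eq_riemannZeta hz',
    ArithmeticFunction.LSeries_vonMangoldt_eq_deriv_riemannZeta_div hz',
    W_eq (by rintro rfl; simp at hz') (riemannZeta_ne_zero_of_one_le_re hz'.le), neg_div]

lemma exists_norm_LSeries_a_le : ∃ C : ℝ, 0 < C ∧ ∀ s : ℂ, 1 < s.re → s.re ≤ 2 →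
    ‖LSeries (fun n => (a n : ℂ)) s‖ ≤ C * (1 + |s.im|) ^ (1 / 2 : ℝ) := by
  obtain ⟨C, hC, h⟩ := exists_norm_deriv_deriv_W_le
  exact ⟨C, hC, fun s h1 h2 => by rw [LSeries_a_eq h1]; exact h s h1 h2⟩

end SPProof

/-! ### Mellin inversion and Riesz means -/

namespace SPProof
open Complex Filter Topology

/-- The Riesz kernel `max (1 - t) 0` on `0 < t`, written as a difference of the two functions whose
Mellin transforms are in Mathlib. -/
noncomputable def kernel (t : ℝ) : ℂ :=
  (Set.Ioc (0 : ℝ) 1).indicator (fun _ => (1 : ℂ)) t -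
    (Set.Ioc (0 : ℝ) 1).indicator (fun t : ℝ => (t : ℂ) ^ (1 : ℂ)) t

lemma kernel_eq {t : ℝ} (ht : 0 < t) : kernel t = ((max (1 - t) 0 : ℝ) : ℂ) := by
  rw [kernel]
  by_cases h : t ≤ 1
  · have : t ∈ Set.Ioc (0 : ℝ) 1 := ⟨ht, h⟩
    rw [Set.indicator_of_mem this, Set.indicator_of_mem this, max_eq_left (by linarith)]
    simp
  · have : t ∉ Set.Ioc (0 : ℝ) 1 := fun h' => h h'.2
    rw [Set.indicator_of_notMem this, Set.indicator_of_notMem this, max_eq_right (by linarith)]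
    simp

lemma hasMellin_kernel {s : ℂ} (hs : 0 < s.re) : HasMellin kernel s (1 / s - 1 / (s + 1)) := by
  have h1 := hasMellin_one_Ioc hs
  have h2 := hasMellin_cpow_Ioc 1 (s := s) (by simp; linarith)
  have := hasMellin_sub h1.1 h2.1
  rw [h1.2, h2.2] at this
  exact this

lemma norm_kernel_mellin_le {s : ℂ} (hs : 1 ≤ s.re) :
    ‖1 / s - 1 / (s + 1)‖ ≤ 2 * (1 + |s.im|) ^ (-2 : ℝ) := by
  have h0 : s ≠ 0 := by rintro rfl; simp at hs; linarith
  have h1 : s + 1 ≠ 0 := by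
    intro h
    have := congrArg re h
    simp at this; linarith
  have key : ∀ z : ℂ, 1 ≤ z.re → (1 + |z.im|) / √2 ≤ ‖z‖ := by
    intro z hz
    rw [div_le_iff₀ (by positivity)]
    refine abs_le_of_sq_le_sq' ?_ (by positivity) |>.2
    rw [mul_pow, Real.sq_sqrt (by norm_num), ← normSq_eq_norm_sq, normSq_apply]
    nlinarith [sq_abs z.im, sq_nonneg (1 - |z.im|)]
  have e : 1 / s - 1 / (s + 1) = 1 / (s * (s + 1)) := by field_simp; ring
  rw [e, norm_div, norm_mul, norm_one, Real.rpow_neg (by positivity), Real.rpow_ofNat]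
  have k1 := key s hs
  have k2 := key (s + 1) (by simp; linarith)
  have : (1 + |s.im|) ^ 2 / 2 ≤ ‖s‖ * ‖s + 1‖ := by
    calc _ = (1 + |s.im|) / √2 * ((1 + |s.im|) / √2) := by
          rw [div_mul_div_comm, Real.mul_self_sqrt (by norm_num)]; ring
      _ ≤ _ := by
        gcongr
        simpa using k2
  calc _ ≤ 1 / ((1 + |s.im|) ^ 2 / 2) := by gcongr
    _ = _ := by field_simp

lemma continuous_kernel_mellin {σ : ℝ} (hσ : 1 ≤ σ) :
    Continuous fun y : ℝ => 1 / ((σ : ℂ) + y * I) - 1 / ((σ : ℂ) + y * I + 1) := by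
  have h0 : ∀ y : ℝ, (σ : ℂ) + y * I ≠ 0 := fun y h => by
    have := congrArg re h; simp at this; linarith
  have h1 : ∀ y : ℝ, (σ : ℂ) + y * I + 1 ≠ 0 := fun y h => by
    have := congrArg re h; simp at this; linarith
  exact (continuous_const.div (by fun_prop) h0).sub (continuous_const.div (by fun_prop) h1)

lemma integrable_kernel_mellin {σ : ℝ} (hσ : 1 ≤ σ) :
    MeasureTheory.Integrable fun y : ℝ => 1 / ((σ : ℂ) + y * I) - 1 / ((σ : ℂ) + y * I + 1) := by
  have h := (integrable_one_add_norm (E := ℝ) (μ := MeasureTheory.volume) (r := 2)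
    (by simp)).const_mul 2
  refine h.mono' (continuous_kernel_mellin hσ).aestronglyMeasurable (Eventually.of_forall fun y => ?_)
  simpa using norm_kernel_mellin_le (s := σ + y * I) (by simpa using hσ)

lemma kernel_inversion {σ : ℝ} (hσ : 1 ≤ σ) {x : ℝ} (hx : 0 < x) :
    ∫ y : ℝ, (x : ℂ) ^ (-((σ : ℂ) + y * I)) *
      (1 / ((σ : ℂ) + y * I) - 1 / ((σ : ℂ) + y * I + 1)) =
      2 * Real.pi * ((max (1 - x) 0 : ℝ) : ℂ) := by
  have hm : ∀ y : ℝ, mellin kernel ((σ : ℂ) + y * I) =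
      1 / ((σ : ℂ) + y * I) - 1 / ((σ : ℂ) + y * I + 1) := fun y =>
    (hasMellin_kernel (by simp; linarith)).2
  have hc : ContinuousAt kernel x := by
    have : kernel =ᶠ[𝓝 x] fun t => ((max (1 - t) 0 : ℝ) : ℂ) := by
      filter_upwards [lt_mem_nhds hx] with t ht using kernel_eq ht
    refine ContinuousAt.congr ?_ this.symm
    fun_prop
  have h := mellinInv_mellin_eq σ kernel hx
    (hasMellin_kernel (by simp; linarith)).1
    (by
      unfold Complex.VerticalIntegrable
      simp only [hm]
      exact integrable_kernel_mellin hσ) hc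
  rw [mellinInv, kernel_eq hx] at h
  simp only [hm, smul_eq_mul] at h
  rw [← h]
  have hpi : (Real.pi : ℂ) ≠ 0 := by exact_mod_cast Real.pi_ne_zero
  rw [Complex.real_smul, ← mul_assoc]
  push_cast
  rw [mul_one_div_cancel (by simp), one_mul]

/-- Perron's formula for the Riesz means: `kernel_inversion` at `x = n / X`, summed against `a n`. -/
lemma hasSum_riesz {σ : ℝ} (hσ : 1 < σ) {X : ℝ} (hX : 0 < X) :
    HasSum (fun n : ℕ => 2 * Real.pi * ((a n * max (1 - n / X) 0 : ℝ) : ℂ))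
      (∫ y : ℝ, (X : ℂ) ^ ((σ : ℂ) + y * I) * LSeries (fun n => (a n : ℂ)) ((σ : ℂ) + y * I) *
        (1 / ((σ : ℂ) + y * I) - 1 / ((σ : ℂ) + y * I + 1))) := by
  set G : ℝ → ℂ := fun y => 1 / ((σ : ℂ) + y * I) - 1 / ((σ : ℂ) + y * I + 1) with hG
  set F : ℕ → ℝ → ℂ := fun n y => (X : ℂ) ^ ((σ : ℂ) + y * I) *
    LSeries.term (fun n => (a n : ℂ)) ((σ : ℂ) + y * I) n * G y with hF
  have hX' : (X : ℂ) ≠ 0 := by exact_mod_cast hX.ne'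
  have ha0 : a 0 = 0 := by simp [a]
  have hF' : ∀ n y, F n y = a n * (((n / X : ℝ) : ℂ) ^ (-((σ : ℂ) + y * I)) * G y) := by
    intro n y
    simp only [hF]
    rcases Nat.eq_zero_or_pos n with rfl | hn
    · simp [ha0]
    · rw [LSeries.term_of_ne_zero hn.ne', cpow_neg, ofReal_div,
        div_cpow_ofReal_nonneg (by positivity) hX.le, inv_div, ofReal_natCast]
      ring
  have hnorm : ∀ n y, ‖F n y‖ = X ^ σ * ‖LSeries.term (fun n => (a n : ℂ)) σ n‖ * ‖G y‖ := by
    intro n y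
    simp only [hF, norm_mul]
    rw [norm_cpow_eq_rpow_re_of_pos hX, LSeries.norm_term_eq, LSeries.norm_term_eq]
    simp
  have hGi : MeasureTheory.Integrable G := integrable_kernel_mellin hσ.le
  have hcont : ∀ n, Continuous (F n) := by
    intro n
    have : Continuous fun y : ℝ => LSeries.term (fun n => (a n : ℂ)) ((σ : ℂ) + y * I) n := by
      rcases Nat.eq_zero_or_pos n with rfl | hn
      · simpa using continuous_const
      · have hn' : (n : ℂ) ≠ 0 := by exact_mod_cast hn.ne'
        simp only [LSeries.term_of_ne_zero hn.ne']
        refine continuous_const.div (Continuous.const_cpow (by fun_prop) (Or.inl hn')) fun y => ?_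
        simp [cpow_eq_zero_iff, hn']
    exact ((Continuous.const_cpow (by fun_prop) (Or.inl hX')).mul this).mul
      (continuous_kernel_mellin hσ.le)
  have hFi : ∀ n, MeasureTheory.Integrable (F n) := by
    intro n
    refine (hGi.norm.const_mul (X ^ σ * ‖LSeries.term (fun n => (a n : ℂ)) σ n‖)).mono'
      (hcont n).aestronglyMeasurable (Eventually.of_forall fun y => (hnorm n y).le)
  have hs : Summable fun n => ∫ y, ‖F n y‖ := by
    simp only [hnorm, MeasureTheory.integral_const_mul]
    refine Summable.mul_right _ (Summable.mul_left _ ?_)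
    exact (LSeriesSummable_a (s := σ) (by simpa using hσ)).norm
  have h := MeasureTheory.hasSum_integral_of_summable_integral_norm hFi hs
  have e1 : ∀ n, ∫ y, F n y = 2 * Real.pi * ((a n * max (1 - n / X) 0 : ℝ) : ℂ) := by
    intro n
    simp only [hF', MeasureTheory.integral_const_mul]
    rcases Nat.eq_zero_or_pos n with rfl | hn
    · simp [ha0]
    · rw [kernel_inversion hσ.le (by positivity)]
      push_cast
      ring
  have e2 : ∀ y, ∑' n, F n y = (X : ℂ) ^ ((σ : ℂ) + y * I) *
      LSeries (fun n => (a n : ℂ)) ((σ : ℂ) + y * I) * G y := by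
    intro y
    simp only [hF]
    rw [tsum_mul_right, tsum_mul_left]
    rfl
  simp only [e1, e2] at h
  exact h

lemma exists_riesz_le : ∃ C : ℝ, 0 < C ∧ ∀ N : ℕ, 1 ≤ N →
    |∑ n ∈ Finset.range N, a n * ((N : ℝ) - n)| ≤ C * N ^ 2 := by
  obtain ⟨C, hC, hD⟩ := exists_norm_LSeries_a_le
  have hint := (integrable_one_add_norm (E := ℝ) (μ := MeasureTheory.volume) (r := 3 / 2)
    (by norm_num))
  set J := ∫ y : ℝ, (1 + ‖y‖) ^ (-(3 / 2 : ℝ)) with hJ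
  have hJ0 : 0 ≤ J := MeasureTheory.integral_nonneg fun y => by positivity
  refine ⟨2 * C * J + 1, by positivity, fun N hN => ?_⟩
  have hN0 : (0 : ℝ) < N := by exact_mod_cast hN
  set S := ∑ n ∈ Finset.range N, a n * ((N : ℝ) - n) with hS
  have hσ : ∀ σ : ℝ, 1 < σ → σ ≤ 2 → 2 * Real.pi * (|S| / N) ≤ 2 * C * J * (N : ℝ) ^ σ := by
    intro σ h1 h2
    have h := hasSum_riesz h1 hN0
    have h' : HasSum (fun n : ℕ => 2 * Real.pi * ((a n * max (1 - n / (N : ℝ)) 0 : ℝ) : ℂ))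
        (2 * Real.pi * ((S / N : ℝ) : ℂ)) := by
      have e : 2 * Real.pi * ((S / N : ℝ) : ℂ) = ∑ n ∈ Finset.range N,
          2 * Real.pi * ((a n * max (1 - n / (N : ℝ)) 0 : ℝ) : ℂ) := by
        rw [← Finset.mul_sum, ← ofReal_sum, hS, Finset.sum_div]
        congr 2
        refine Finset.sum_congr rfl fun n hn => ?_
        have : (n : ℝ) / N ≤ 1 := by
          rw [div_le_one hN0]; exact_mod_cast (Finset.mem_range.1 hn).le
        rw [max_eq_left (by linarith)]
        field_simp
      rw [e]
      refine hasSum_sum_of_ne_finset_zero fun n hn => ?_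
      have : 1 ≤ (n : ℝ) / N := by
        rw [one_le_div hN0]; exact_mod_cast not_lt.1 (fun h => hn (Finset.mem_range.2 h))
      rw [max_eq_right (by linarith)]
      simp
    have e := h.unique h'
    have : 2 * Real.pi * (|S| / N) = ‖2 * Real.pi * ((S / N : ℝ) : ℂ)‖ := by
      rw [norm_mul, norm_mul, norm_real, norm_real, Real.norm_eq_abs, Real.norm_eq_abs, abs_div,
        abs_of_pos Real.pi_pos, abs_of_pos hN0]
      simp
    rw [this, ← e, hJ, ← MeasureTheory.integral_const_mul, ← MeasureTheory.integral_mul_const]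
    refine MeasureTheory.norm_integral_le_of_norm_le ((hint.const_mul _).mul_const _)
      (Eventually.of_forall fun y => ?_)
    have b1 := hD (σ + y * I) (by simpa using h1) (by simpa using h2)
    have b2 := norm_kernel_mellin_le (s := σ + y * I) (by simpa using h1.le)
    simp only [add_im, ofReal_im, mul_im, ofReal_re, I_im, mul_one, I_re, mul_zero, add_zero,
      zero_add] at b1 b2
    rw [norm_mul, norm_mul, norm_cpow_eq_rpow_re_of_pos (by exact_mod_cast hN0)]
    calc _ ≤ (N : ℝ) ^ σ * (C * (1 + |y|) ^ (1 / 2 : ℝ)) * (2 * (1 + |y|) ^ (-2 : ℝ)) := by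
          gcongr
          · exact_mod_cast hN
          · simp
      _ = 2 * C * ((1 + |y|) ^ (1 / 2 : ℝ) * (1 + |y|) ^ (-2 : ℝ)) * (N : ℝ) ^ σ := by ring
      _ = _ := by
        rw [← Real.rpow_add (by positivity)]
        norm_num
  -- the constant does not depend on `σ`, so the exponent may be brought down to `1`
  have hlim : Tendsto (fun σ : ℝ => 2 * C * J * (N : ℝ) ^ σ) (𝓝[>] 1)
      (𝓝 (2 * C * J * (N : ℝ) ^ (1 : ℝ))) := by
    have : Continuous fun σ : ℝ => 2 * C * J * (N : ℝ) ^ σ :=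
      continuous_const.mul (Real.continuous_const_rpow hN0.ne')
    exact this.continuousAt.tendsto.mono_left nhdsWithin_le_nhds
  have hfin : 2 * Real.pi * (|S| / N) ≤ 2 * C * J * (N : ℝ) ^ (1 : ℝ) := by
    refine ge_of_tendsto hlim ?_
    filter_upwards [Ioc_mem_nhdsGT (show (1 : ℝ) < 2 by norm_num)] with σ hσ'
    exact hσ σ hσ'.1 hσ'.2
  rw [Real.rpow_one] at hfin
  have hp : |S| / N ≤ 2 * Real.pi * (|S| / N) :=
    le_mul_of_one_le_left (by positivity) (by linarith [Real.pi_gt_three])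
  have : |S| / N ≤ 2 * C * J * N := hp.trans hfin
  rw [div_le_iff₀ hN0] at this
  nlinarith [sq_nonneg (N : ℝ)]

end SPProof

/-! ### The prime number theorem with error term -/

namespace SPProof
open Filter Topology
open ArithmeticFunction (vonMangoldt)

/-- One-sided slow variation of the partial sums of `a`, from `Λ ≥ 0`. -/
lemma sum_a_sub_le {R : ℕ} (m j : ℕ) (h : m + j ≤ R) :
    ∑ n ∈ Finset.range (m + 1), a n - j * Real.log R ^ 2 ≤
      ∑ n ∈ Finset.range (m + j + 1), a n := by
  induction j with
  | zero => simp
  | succ j ih =>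
    have h1 := ih (by omega)
    rw [show m + (j + 1) + 1 = m + j + 1 + 1 by ring, Finset.sum_range_succ _ (m + j + 1)]
    have h2 : -Real.log R ^ 2 ≤ a (m + j + 1) := by
      have h3 : Real.log ((m + j + 1 : ℕ) : ℝ) ^ 2 ≤ Real.log R ^ 2 := by
        have : Real.log ((m + j + 1 : ℕ) : ℝ) ≤ Real.log R :=
          Real.log_le_log (by positivity) (by exact_mod_cast h)
        have h0 : 0 ≤ Real.log ((m + j + 1 : ℕ) : ℝ) := Real.log_natCast_nonneg _
        gcongr
      have h4 : 0 ≤ vonMangoldt (m + j + 1) * Real.log ((m + j + 1 : ℕ) : ℝ) ^ 2 :=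
        mul_nonneg ArithmeticFunction.vonMangoldt_nonneg (sq_nonneg _)
      rw [a, sub_mul]
      linarith
    push_cast
    linarith

/-- The partial sums `A` of `a` are the differences of the Riesz sums `S`. Averaging `A` over `H` steps to
the right and to the left of `N` costs `H log² N` by `sum_a_sub_le`, and `S = O(N²)` bounds the averages by
`O(N² / H)`; the choice `H = ⌈N / log N⌉` balances the two. -/
lemma exists_sum_a_le : ∃ C : ℝ, 0 < C ∧ ∀ N : ℕ, 3 ≤ N →
    |∑ n ∈ Finset.range (N + 1), a n| ≤ C * N * Real.log N := by
  obtain ⟨C, hC, hS⟩ := exists_riesz_le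
  set A : ℕ → ℝ := fun m => ∑ n ∈ Finset.range (m + 1), a n with hA
  set S : ℕ → ℝ := fun N => ∑ n ∈ Finset.range N, a n * ((N : ℝ) - n) with hSdef
  have hSA : ∀ m, S (m + 1) - S m = A m := by
    intro m
    simp only [hSdef, hA]
    rw [Finset.sum_range_succ _ m, Finset.sum_range_succ _ m, add_sub_right_comm,
      ← Finset.sum_sub_distrib]
    push_cast
    congr 1
    · refine Finset.sum_congr rfl fun n _ => by ring
    · ring
  have htel : ∀ m H : ℕ, ∑ i ∈ Finset.range H, A (m + i) = S (m + H) - S m := by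
    intro m H
    have := Finset.sum_range_sub (fun j => S (m + j)) H
    simp only [← add_assoc, hSA, add_zero] at this
    exact this
  have hSb : ∀ N M : ℕ, 1 ≤ M → M ≤ 2 * N → |S M| ≤ C * (2 * N) ^ 2 := by
    intro N M h1 h2
    refine (hS M h1).trans ?_
    have : (M : ℝ) ≤ 2 * N := by exact_mod_cast h2
    gcongr
  have key : ∀ N H : ℕ, 1 ≤ H → H ≤ N →
      |A N| * H ≤ 8 * C * N ^ 2 + H * (H * Real.log (2 * N : ℕ) ^ 2) := by
    intro N H h1 h2
    set L := Real.log (2 * N : ℕ) ^ 2 with hL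
    have hL0 : 0 ≤ L := sq_nonneg _
    have up : ∑ i ∈ Finset.range H, (A N - H * L) ≤ ∑ i ∈ Finset.range H, A (N + i) := by
      refine Finset.sum_le_sum fun i hi => ?_
      have hi' := Finset.mem_range.1 hi
      have := sum_a_sub_le (R := 2 * N) N i (by omega)
      have h3 : (i : ℝ) * L ≤ H * L := by
        have : (i : ℝ) ≤ H := by exact_mod_cast hi'.le
        gcongr
      simp only [hA]
      linarith
    have lo : ∑ i ∈ Finset.range H, A (N + 1 - H + i) ≤ ∑ i ∈ Finset.range H, (A N + H * L) := by
      refine Finset.sum_le_sum fun i hi => ?_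
      have hi' := Finset.mem_range.1 hi
      have := sum_a_sub_le (R := 2 * N) (N + 1 - H + i) (H - 1 - i) (by omega)
      rw [show N + 1 - H + i + (H - 1 - i) = N by omega] at this
      have h3 : ((H - 1 - i : ℕ) : ℝ) * L ≤ H * L := by
        have : ((H - 1 - i : ℕ) : ℝ) ≤ H := by exact_mod_cast (by omega)
        gcongr
      simp only [hA]
      linarith
    rw [htel, Finset.sum_const, Finset.card_range, nsmul_eq_mul] at up lo
    rw [show N + 1 - H + H = N + 1 by omega] at lo
    have b1 := abs_le.1 (hSb N (N + H) (by omega) (by omega))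
    have b2 := abs_le.1 (hSb N N (by omega) (by omega))
    have b3 := abs_le.1 (hSb N (N + 1) (by omega) (by omega))
    have b4 := abs_le.1 (hSb N (N + 1 - H) (by omega) (by omega))
    have : |A N * H| ≤ 8 * C * N ^ 2 + H * (H * L) := by
      rw [abs_le]
      constructor <;> nlinarith
    rwa [abs_mul, Nat.abs_cast] at this
  refine ⟨8 * C + 8, by positivity, fun N hN => ?_⟩
  have hN0 : (0 : ℝ) < N := by exact_mod_cast (by omega : 0 < N)
  have hN3 : (3 : ℝ) ≤ N := by exact_mod_cast hN
  set l := Real.log N with hl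
  have hl1 : 1 ≤ l := by
    rw [hl, Real.le_log_iff_exp_le hN0]
    linarith [Real.exp_one_lt_three]
  have hlN : l ≤ N := (Real.log_le_sub_one_of_pos hN0).trans (by linarith)
  set H := ⌈(N : ℝ) / l⌉₊ with hH
  have hH1 : (N : ℝ) / l ≤ H := Nat.le_ceil _
  have hH2 : (H : ℝ) ≤ 2 * N / l := by
    have h1 := (Nat.ceil_lt_add_one (show 0 ≤ (N : ℝ) / l by positivity)).le
    have h2 : 1 ≤ (N : ℝ) / l := (one_le_div (by positivity)).2 hlN
    calc (H : ℝ) ≤ (N : ℝ) / l + 1 := h1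
      _ ≤ _ := by rw [mul_div_assoc]; linarith
  have hHpos : 0 < (N : ℝ) / l := by positivity
  have hH3 : 1 ≤ H := Nat.one_le_ceil_iff.2 hHpos
  have hH4 : H ≤ N := Nat.ceil_le.2 (div_le_self hN0.le hl1)
  have hk := key N H hH3 hH4
  have hlog : Real.log (2 * N : ℕ) ≤ 2 * l := by
    push_cast
    rw [Real.log_mul (by norm_num) hN0.ne']
    have : Real.log 2 ≤ l := Real.log_le_log (by norm_num) (by linarith)
    linarith
  have hlog0 : 0 ≤ Real.log (2 * N : ℕ) := Real.log_natCast_nonneg _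
  have hHp : (0 : ℝ) < H := by exact_mod_cast hH3
  have : |A N| ≤ 8 * C * N ^ 2 / H + H * Real.log (2 * N : ℕ) ^ 2 := by
    rw [← mul_le_mul_iff_left₀ hHp, add_mul, div_mul_cancel₀ _ hHp.ne']
    linarith
  calc |A N| ≤ _ := this
    _ ≤ 8 * C * N ^ 2 / (N / l) + (2 * N / l) * (2 * l) ^ 2 := by gcongr
    _ = _ := by field_simp; ring

/-- The increment of the sum from `N` to `N + 1` is `(ψ N + N) log (1 + 1 / N) = O(1)`. -/
lemma exists_sum_log_le : ∃ C : ℝ, 0 < C ∧ ∀ N : ℕ, 1 ≤ N →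
    ∑ n ∈ Finset.Ioc 0 N, (vonMangoldt n + 1) * (Real.log N - Real.log n) ≤ C * N := by
  have h4 : 0 ≤ Real.log 4 := Real.log_nonneg (by norm_num)
  refine ⟨Real.log 4 + 5, by positivity, fun N hN => ?_⟩
  induction N, hN using Nat.le_induction with
  | base => simp; positivity
  | succ N hN ih =>
    have hN0 : (0 : ℝ) < N := by exact_mod_cast hN
    have e : ∑ n ∈ Finset.Ioc 0 (N + 1),
        (vonMangoldt n + 1) * (Real.log (N + 1 : ℕ) - Real.log n) =
        ∑ n ∈ Finset.Ioc 0 N, (vonMangoldt n + 1) * (Real.log N - Real.log n) +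
          (Chebyshev.psi N + N) * (Real.log (N + 1 : ℕ) - Real.log N) := by
      rw [Finset.sum_Ioc_succ_top (by omega), sub_self, mul_zero, add_zero]
      have : Chebyshev.psi N + N = ∑ n ∈ Finset.Ioc 0 N, (vonMangoldt n + 1) := by
        rw [Finset.sum_add_distrib, Chebyshev.psi, Nat.floor_natCast]
        simp
      rw [this, Finset.sum_mul, ← Finset.sum_add_distrib]
      refine Finset.sum_congr rfl fun n _ => by ring
    have h1 := Chebyshev.psi_le_const_mul_self hN0.le
    have h2 : Real.log (N + 1 : ℕ) - Real.log N ≤ 1 / N := by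
      rw [← Real.log_div (by positivity) hN0.ne']
      refine (Real.log_le_sub_one_of_pos (by positivity)).trans (le_of_eq ?_)
      push_cast
      field_simp
      ring
    have h3 : (Chebyshev.psi N + N) * (Real.log (N + 1 : ℕ) - Real.log N) ≤
        ((Real.log 4 + 5) * N) * (1 / N) := by
      have : 0 ≤ Chebyshev.psi N := Chebyshev.psi_nonneg _
      refine mul_le_mul (by linarith) h2 ?_ (by positivity)
      rw [sub_nonneg]
      exact Real.log_le_log hN0 (by push_cast; linarith)
    have h5 : ((Real.log 4 + 5) * N) * (1 / N : ℝ) = Real.log 4 + 5 := by field_simp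
    rw [e]
    push_cast
    push_cast at h3 ih
    linarith

/-- The weight `log² n` is replaced by `log² N` at a cost controlled by `exists_sum_log_le`. -/
lemma exists_psi_sub_le : ∃ C : ℝ, 0 < C ∧ ∀ N : ℕ, 3 ≤ N →
    |Chebyshev.psi N - N| ≤ C * N / Real.log N := by
  obtain ⟨C₁, hC₁, h1⟩ := exists_sum_a_le
  obtain ⟨C₂, hC₂, h2⟩ := exists_sum_log_le
  refine ⟨C₁ + 2 * C₂, by positivity, fun N hN => ?_⟩
  have hN0 : (0 : ℝ) < N := by exact_mod_cast (by omega : 0 < N)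
  have hN3 : (3 : ℝ) ≤ N := by exact_mod_cast hN
  have b1 := h1 N hN
  have b2 := h2 N (by omega)
  set l := Real.log N with hl
  have hl1 : 1 ≤ l := by
    rw [hl, Real.le_log_iff_exp_le hN0]
    linarith [Real.exp_one_lt_three]
  have e1 : ∑ n ∈ Finset.range (N + 1), a n = ∑ n ∈ Finset.Ioc 0 N, a n := by
    rw [Finset.range_eq_Ico, Finset.sum_eq_sum_Ico_succ_bot (by omega)]
    simp only [a, Nat.cast_zero, Real.log_zero]
    rw [show Finset.Ico (0 + 1) (N + 1) = Finset.Ioc 0 N by ext; simp; omega]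
    simp
  have e2 : (Chebyshev.psi N - N) * l ^ 2 = ∑ n ∈ Finset.Ioc 0 N, a n +
      ∑ n ∈ Finset.Ioc 0 N, (vonMangoldt n - 1) * (l ^ 2 - Real.log n ^ 2) := by
    have : Chebyshev.psi N - N = ∑ n ∈ Finset.Ioc 0 N, (vonMangoldt n - 1) := by
      rw [Finset.sum_sub_distrib, Chebyshev.psi, Nat.floor_natCast]
      simp
    rw [this, Finset.sum_mul, ← Finset.sum_add_distrib]
    refine Finset.sum_congr rfl fun n _ => by rw [a]; ring
  have e3 : |∑ n ∈ Finset.Ioc 0 N, (vonMangoldt n - 1) * (l ^ 2 - Real.log n ^ 2)| ≤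
      2 * l * ∑ n ∈ Finset.Ioc 0 N, (vonMangoldt n + 1) * (l - Real.log n) := by
    refine (Finset.abs_sum_le_sum_abs _ _).trans ?_
    rw [Finset.mul_sum]
    refine Finset.sum_le_sum fun n hn => ?_
    have hn' := Finset.mem_Ioc.1 hn
    have hn0 : (0 : ℝ) < n := by exact_mod_cast hn'.1
    have k1 : Real.log n ≤ l := Real.log_le_log hn0 (by exact_mod_cast hn'.2)
    have k0 : 0 ≤ Real.log n := Real.log_natCast_nonneg _
    have k2 : |vonMangoldt n - 1| ≤ vonMangoldt n + 1 := by
      have : 0 ≤ vonMangoldt n := ArithmeticFunction.vonMangoldt_nonneg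
      rw [abs_le]; constructor <;> linarith
    have k3 : |l ^ 2 - Real.log n ^ 2| ≤ 2 * l * (l - Real.log n) := by
      rw [abs_of_nonneg (by nlinarith)]
      nlinarith
    rw [abs_mul]
    calc _ ≤ (vonMangoldt n + 1) * (2 * l * (l - Real.log n)) := by
          gcongr
      _ = _ := by ring
  have e4 : |Chebyshev.psi N - N| * l ^ 2 ≤ (C₁ + 2 * C₂) * N * l := by
    rw [← abs_of_nonneg (sq_nonneg l), ← abs_mul, e2]
    rw [e1] at b1
    refine (abs_add_le _ _).trans ?_
    have : 2 * l * ∑ n ∈ Finset.Ioc 0 N, (vonMangoldt n + 1) * (l - Real.log n) ≤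
      2 * l * (C₂ * N) := by gcongr
    linarith
  rw [le_div_iff₀ (by positivity)]
  have : (|Chebyshev.psi N - N| * l) * l ≤ ((C₁ + 2 * C₂) * N) * l := by linarith
  exact le_of_mul_le_mul_right this (by positivity)

/-- The prime number theorem with error term `O(x / log² x)`. -/
lemma exists_primeCounting_sub_le : ∃ C x₀ : ℝ, 0 < C ∧ ∀ x : ℝ, x₀ ≤ x →
    |(Nat.primeCounting ⌊x⌋₊ : ℝ) - x / Real.log x| ≤ C * x / Real.log x ^ 2 := by
  obtain ⟨C₁, hC₁, h1⟩ := exists_psi_sub_le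
  obtain ⟨C₂, hC₂, h2⟩ := (Chebyshev.primeCounting_sub_theta_div_log_isBigO).exists_pos
  obtain ⟨x₁, h3⟩ := eventually_atTop.1 h2.bound
  refine ⟨C₂ + 2 * C₁ + 33, max x₁ 4, by positivity, fun x hx => ?_⟩
  have hx4 : 4 ≤ x := (le_max_right _ _).trans hx
  have hx0 : 0 < x := by linarith
  have b1 := h3 x ((le_max_left _ _).trans hx)
  set l := Real.log x with hl
  have hl1 : 1 ≤ l := by
    rw [hl, Real.le_log_iff_exp_le hx0]
    linarith [Real.exp_one_lt_three]
  rw [Real.norm_eq_abs, Real.norm_eq_abs, abs_of_nonneg (by positivity : 0 ≤ x / l ^ 2)] at b1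
  have hN : 3 ≤ ⌊x⌋₊ := Nat.le_floor (by push_cast; linarith)
  have b2 := h1 _ hN
  have hf1 : (⌊x⌋₊ : ℝ) ≤ x := Nat.floor_le hx0.le
  have hf2 : x < ⌊x⌋₊ + 1 := Nat.lt_floor_add_one x
  have hlf : l / 2 ≤ Real.log ⌊x⌋₊ := by
    have e : l = 2 * Real.log (√x) := by
      rw [Real.log_sqrt hx0.le]; ring
    have : Real.log (√x) ≤ Real.log ⌊x⌋₊ := by
      refine Real.log_le_log (by positivity) ?_
      rw [Real.sqrt_le_iff]
      constructor
      · positivity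
      · nlinarith
    linarith
  have b3 : |Chebyshev.psi x - x| ≤ (2 * C₁ + 1) * x / l := by
    rw [Chebyshev.psi_eq_psi_coe_floor]
    have h5 : C₁ * ⌊x⌋₊ / Real.log ⌊x⌋₊ ≤ C₁ * x / (l / 2) := by gcongr
    have h6 : 1 ≤ x / l := by
      rw [one_le_div (by positivity)]
      exact (Real.log_le_sub_one_of_pos hx0).trans (by linarith)
    have h7 : |(⌊x⌋₊ : ℝ) - x| ≤ 1 := by rw [abs_le]; constructor <;> linarith
    calc _ ≤ |Chebyshev.psi ⌊x⌋₊ - ⌊x⌋₊| + |(⌊x⌋₊ : ℝ) - x| := abs_sub_le _ _ _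
      _ ≤ C₁ * x / (l / 2) + x / l := by linarith
      _ = _ := by field_simp
  have b4 : |Chebyshev.psi x - Chebyshev.theta x| ≤ 32 * x / l := by
    refine (Chebyshev.abs_psi_sub_theta_le_sqrt_mul_log (by linarith)).trans ?_
    rw [le_div_iff₀ (by positivity)]
    -- `log x ≤ 4 x ^ (1/4)`, written with iterated square roots
    have h8 : l ≤ 4 * √(√x) := by
      have h9 : Real.log (√(√x)) = l / 4 := by
        rw [Real.log_sqrt (Real.sqrt_nonneg _), Real.log_sqrt hx0.le]; ring
      have := Real.log_le_sub_one_of_pos (show 0 < √(√x) by positivity)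
      linarith
    have h10 : l ^ 2 ≤ 16 * √x := by
      calc l ^ 2 ≤ (4 * √(√x)) ^ 2 := by gcongr
        _ = _ := by rw [mul_pow, Real.sq_sqrt (Real.sqrt_nonneg _)]; norm_num
    calc 2 * √x * l * l = 2 * √x * l ^ 2 := by ring
      _ ≤ 2 * √x * (16 * √x) := by gcongr
      _ = 32 * (√x * √x) := by ring
      _ = 32 * x := by rw [Real.mul_self_sqrt hx0.le]
  have b5 : |Chebyshev.theta x / l - x / l| ≤ (2 * C₁ + 33) * x / l ^ 2 := by
    rw [← sub_div, abs_div, abs_of_nonneg (by positivity : 0 ≤ l), div_le_iff₀ (by positivity)]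
    have : |Chebyshev.theta x - x| ≤
        |Chebyshev.theta x - Chebyshev.psi x| + |Chebyshev.psi x - x| := abs_sub_le _ _ _
    rw [abs_sub_comm (Chebyshev.theta x) (Chebyshev.psi x)] at this
    calc _ ≤ 32 * x / l + (2 * C₁ + 1) * x / l := by linarith
      _ = _ := by field_simp; ring
  calc _ ≤ _ := abs_sub_le _ (Chebyshev.theta x / l) _
    _ ≤ C₂ * (x / l ^ 2) + (2 * C₁ + 33) * x / l ^ 2 := add_le_add b1 b5
    _ = _ := by field_simp; ring

end SPProof

/-! ### Counting SP numbers -/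

namespace SPProof
open Filter Topology

/-- The exponent of `p` is odd on the left, and even on the right unless `p = q`. -/
lemma prime_mul_sq_inj {p q b c : ℕ} (hp : p.Prime) (hq : q.Prime) (hb : b ≠ 0) (hc : c ≠ 0)
    (h : p * b ^ 2 = q * c ^ 2) : p = q ∧ b = c := by
  have hpq : p = q := by
    by_contra hne
    have h1 := congrArg (fun m => m.factorization p) h
    simp only [Nat.factorization_mul hp.ne_zero (pow_ne_zero 2 hb),
      Nat.factorization_mul hq.ne_zero (pow_ne_zero 2 hc), Nat.factorization_pow,
      Finsupp.add_apply, Finsupp.smul_apply, hp.factorization_self, hq.factorization,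
      Finsupp.single_apply, if_neg (Ne.symm hne), smul_eq_mul] at h1
    omega
  subst hpq
  refine ⟨rfl, ?_⟩
  have := Nat.eq_of_mul_eq_mul_left hp.pos h
  exact Nat.pow_left_injective (by norm_num : 2 ≠ 0) this

/-- SP numbers `p * (b + 2) ^ 2` sorted by `b`; such a number being at most `n` forces `b < n`. -/
lemma SPCount_eq (n : ℕ) :
    SPCount n = ∑ b ∈ Finset.range n, Nat.primeCounting (n / (b + 2) ^ 2) := by
  classical
  rw [SPCount]
  simp only [← Nat.primesLE_card_eq_primeCounting]
  rw [← Finset.card_sigma]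
  symm
  refine Finset.card_bij (fun x _ => x.2 * (x.1 + 2) ^ 2) ?_ ?_ ?_
  · rintro ⟨b, p⟩ h
    simp only [Finset.mem_sigma, Finset.mem_range, Nat.mem_primesLE] at h
    obtain ⟨-, h1, h2⟩ := h
    simp only [Finset.mem_filter, Finset.mem_range, Nat.lt_succ_iff]
    exact ⟨(Nat.le_div_iff_mul_le (by positivity)).1 h1, p, b + 2, h2, by omega, rfl⟩
  · rintro ⟨b, p⟩ h ⟨c, q⟩ h' e
    simp only [Finset.mem_sigma, Finset.mem_range, Nat.mem_primesLE] at h h'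
    obtain ⟨rfl, h2⟩ := prime_mul_sq_inj h.2.2 h'.2.2 (by positivity) (by positivity) e
    obtain rfl : b = c := Nat.add_right_cancel h2
    rfl
  · rintro m h
    simp only [Finset.mem_filter, Finset.mem_range, Nat.lt_succ_iff] at h
    obtain ⟨h1, p, c, hp, hc, rfl⟩ := h
    obtain ⟨b, rfl⟩ : ∃ b, c = b + 2 := ⟨c - 2, by omega⟩
    refine ⟨⟨b, p⟩, ?_, rfl⟩
    simp only [Finset.mem_sigma, Finset.mem_range, Nat.mem_primesLE]
    refine ⟨?_, (Nat.le_div_iff_mul_le (by positivity)).2 h1, hp⟩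
    nlinarith [hp.two_le]

lemma hasSum_SPCount (n : ℕ) :
    HasSum (fun b : ℕ => (Nat.primeCounting (n / (b + 2) ^ 2) : ℝ)) (SPCount n) := by
  rw [SPCount_eq, Nat.cast_sum]
  refine hasSum_sum_of_ne_finset_zero fun b hb => ?_
  have : n ≤ b := by simpa using hb
  rw [Nat.div_eq_of_lt (by nlinarith)]
  simp

lemma hasSum_inv_sq_shift : HasSum (fun b : ℕ => 1 / ((b : ℝ) + 2) ^ 2) (Real.pi ^ 2 / 6 - 1) := by
  have h := (hasSum_nat_add_iff' (f := fun n : ℕ => 1 / (n : ℝ) ^ 2) 2).2 hasSum_zeta_two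
  simp only [Finset.sum_range_succ, Finset.sum_range_zero] at h
  push_cast at h
  simpa using h

/-- The error of the `b`-th summand. It is first bounded by a multiple of `(1 + log b) ^ 2 / b ^ 2`, which
is `O(b ^ (-3/2))`. -/
lemma exists_term_le : ∃ C : ℝ, ∃ N : ℕ, 0 < C ∧ 3 ≤ N ∧ ∀ n : ℕ, N ≤ n → ∀ b : ℕ, 2 ≤ b →
    |(Nat.primeCounting (n / b ^ 2) : ℝ) - n / Real.log n * (1 / (b : ℝ) ^ 2)| ≤
      C * n / Real.log n ^ 2 * (b : ℝ) ^ (-(3 / 2) : ℝ) := by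
  obtain ⟨C, x₀, hC, h⟩ := exists_primeCounting_sub_le
  refine ⟨16 * (4 * C + 20), max 3 ⌈x₀ ^ 2⌉₊, by positivity, le_max_left _ _,
    fun n hn b hb => ?_⟩
  have hn3 : (3 : ℝ) ≤ n := by exact_mod_cast (le_max_left _ _).trans hn
  have hnx : x₀ ^ 2 ≤ n := (Nat.le_ceil _).trans (by exact_mod_cast (le_max_right _ _).trans hn)
  have hn0 : (0 : ℝ) < n := by linarith
  have hb2 : (2 : ℝ) ≤ b := by exact_mod_cast hb
  have hb0 : (0 : ℝ) < b := by linarith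
  set L := Real.log n with hL
  have hL1 : 1 ≤ L := by
    rw [hL, Real.le_log_iff_exp_le hn0]
    linarith [Real.exp_one_lt_three]
  set v := Real.log b with hv
  have hv0 : 0 ≤ v := Real.log_natCast_nonneg _
  set x : ℝ := n / (b : ℝ) ^ 2 with hx
  have hx0 : 0 < x := by positivity
  have hfl : ⌊x⌋₊ = n / b ^ 2 := by
    rw [hx, ← Nat.cast_pow, Nat.floor_div_eq_div]
  have hxe : (n : ℝ) / L * (1 / (b : ℝ) ^ 2) = x / L := by rw [hx]; field_simp
  have hw : (1 + v) ^ 2 * (1 / (b : ℝ) ^ 2) ≤ 16 * (b : ℝ) ^ (-(3 / 2) : ℝ) := by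
    have h1 : 1 + v ≤ 4 * (b : ℝ) ^ (1 / 4 : ℝ) := by
      have h2 := Real.log_le_sub_one_of_pos (show 0 < (b : ℝ) ^ (1 / 4 : ℝ) by positivity)
      rw [Real.log_rpow hb0] at h2
      linarith
    calc (1 + v) ^ 2 * (1 / (b : ℝ) ^ 2)
        ≤ (4 * (b : ℝ) ^ (1 / 4 : ℝ)) ^ 2 * (1 / (b : ℝ) ^ 2) := by gcongr
      _ = 16 * (((b : ℝ) ^ (1 / 4 : ℝ)) ^ (2 : ℝ) * (b : ℝ) ^ (-2 : ℝ)) := by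
        rw [Real.rpow_neg hb0.le, Real.rpow_two, Real.rpow_two]; ring
      _ = _ := by
        rw [← Real.rpow_mul hb0.le, ← Real.rpow_add hb0]; norm_num
  have key : |(Nat.primeCounting (n / b ^ 2) : ℝ) - x / L| ≤
      (4 * C + 20) * (1 + v) ^ 2 * x / L ^ 2 := by
    rw [← hfl]
    -- the prime number theorem at `x` for `b ≤ n ^ (1/4)`, the trivial bound otherwise
    by_cases hbn : (b : ℝ) ^ 4 ≤ n
    · have hxx : x₀ ≤ x := by
        refine le_of_sq_le_sq (hnx.trans ?_) hx0.le
        rw [hx, div_pow, le_div_iff₀ (by positivity)]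
        nlinarith
      have hk := h x hxx
      have hlx : Real.log x = L - 2 * v := by
        rw [hx, Real.log_div hn0.ne' (by positivity), Real.log_pow]
        push_cast; rfl
      have hvL : 4 * v ≤ L := by
        have := Real.log_le_log (by positivity) hbn
        rw [Real.log_pow] at this
        exact_mod_cast this
      set l := Real.log x with hl
      have hlL : L / 2 ≤ l := by linarith
      have hl0 : 0 < l := by linarith
      have h1 : C * x / l ^ 2 ≤ C * x / (L / 2) ^ 2 := by gcongr
      have h2 : |x / l - x / L| ≤ x * (2 * v) / ((L / 2) * L) := by
        have e : x / l - x / L = x * (2 * v) / (l * L) := by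
          have : 2 * v = L - l := by linarith
          rw [this]; field_simp
        rw [e, abs_of_nonneg (by positivity)]
        gcongr
      calc _ ≤ _ := abs_sub_le _ (x / l) _
        _ ≤ C * x / (L / 2) ^ 2 + x * (2 * v) / ((L / 2) * L) := by linarith
        _ = (4 * C + 4 * v) * x / L ^ 2 := by field_simp; ring
        _ ≤ _ := by
          gcongr
          nlinarith [mul_nonneg hC.le hv0, mul_nonneg hC.le (sq_nonneg v)]
    · push Not at hbn
      have hvL : L ≤ 4 * v := by
        have := Real.log_le_log hn0 hbn.le
        rw [Real.log_pow] at this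
        exact_mod_cast this
      have h1 : (Nat.primeCounting ⌊x⌋₊ : ℝ) ≤ x := by
        refine le_trans ?_ (Nat.floor_le hx0.le)
        rw [← Nat.primesLE_card_eq_primeCounting]
        have : Nat.primesLE ⌊x⌋₊ ⊆ Finset.Ioc 0 ⌊x⌋₊ := fun p hp => by
          rw [Nat.mem_primesLE] at hp
          exact Finset.mem_Ioc.2 ⟨hp.2.pos, hp.1⟩
        exact_mod_cast (Finset.card_le_card this).trans_eq (by simp)
      have h2 : x / L ≤ x := div_le_self hx0.le hL1
      have h3 : 0 ≤ x / L := by positivity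
      have h4 : (0 : ℝ) ≤ Nat.primeCounting ⌊x⌋₊ := by positivity
      have h5 : |(Nat.primeCounting ⌊x⌋₊ : ℝ) - x / L| ≤ x := by
        rw [abs_le]; constructor <;> linarith
      refine h5.trans ?_
      rw [le_div_iff₀ (by positivity)]
      have h6 : L ^ 2 ≤ (4 * C + 20) * (1 + v) ^ 2 := by
        calc L ^ 2 ≤ (4 * v) ^ 2 := by gcongr
          _ ≤ 20 * (1 + v) ^ 2 := by nlinarith
          _ ≤ _ := by gcongr; linarith
      nlinarith
  rw [hxe]
  refine key.trans ?_
  calc (4 * C + 20) * (1 + v) ^ 2 * x / L ^ 2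
      = (4 * C + 20) * n / L ^ 2 * ((1 + v) ^ 2 * (1 / (b : ℝ) ^ 2)) := by rw [hx]; field_simp
    _ ≤ (4 * C + 20) * n / L ^ 2 * (16 * (b : ℝ) ^ (-(3 / 2) : ℝ)) := by gcongr
    _ = _ := by ring

end SPProof

/-- `SP(n) = (ζ(2) - 1) · n / log n + O(n / (log n)²)`, where `ζ(2) = π²/6`. -/
theorem SPCount_asymptotic :
    ∃ C : ℝ, 0 < C ∧ ∃ N : ℕ, ∀ n : ℕ, N ≤ n →
      |(SPCount n : ℝ) - (Real.pi ^ 2 / 6 - 1) * n / Real.log n| ≤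
        C * n / (Real.log n) ^ 2 := by
  obtain ⟨C, N, hC, hN, h⟩ := SPProof.exists_term_le
  have hs : Summable fun b : ℕ => ((b + 2 : ℕ) : ℝ) ^ (-(3 / 2) : ℝ) :=
    (summable_nat_add_iff 2).2 (Real.summable_nat_rpow.2 (by norm_num))
  set T := ∑' b : ℕ, ((b + 2 : ℕ) : ℝ) ^ (-(3 / 2) : ℝ) with hT
  have hT0 : 0 ≤ T := tsum_nonneg fun b => by positivity
  refine ⟨C * T + 1, by positivity, N, fun n hn => ?_⟩
  have h1 := (SPProof.hasSum_SPCount n).sub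
    (SPProof.hasSum_inv_sq_shift.mul_left ((n : ℝ) / Real.log n))
  have h2 := hs.hasSum.mul_left (C * n / Real.log n ^ 2)
  have h3 := h1.norm_le_of_bounded h2 fun b => by
    have := h n hn (b + 2) (by omega)
    rw [Real.norm_eq_abs]
    push_cast at this ⊢
    exact this
  rw [Real.norm_eq_abs] at h3
  calc _ = |(SPCount n : ℝ) - n / Real.log n * (Real.pi ^ 2 / 6 - 1)| := by congr 2; ring
    _ ≤ C * n / Real.log n ^ 2 * T := h3
    _ = C * T * n / Real.log n ^ 2 := by ring
    _ ≤ _ := by gcongr; linarith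
end

section
/- For all sufficiently large n, the number of SP numbers less than or equal to n is strictly smaller than the number of primes less than or equal to n; that is, SP(n) < π(n) eventually. -/
/-! ### Chebyshev's identity -/

/-- Chebyshev's combination of logarithms of factorials; the divisions are floor divisions. -/
noncomputable def chebF (N : ℕ) : ℝ :=
  Real.log (N.factorial) - Real.log ((N / 2).factorial) - Real.log ((N / 3).factorial)
    - Real.log ((N / 5).factorial) + Real.log ((N / 30).factorial)

/-- Chebyshev's constant, approximately `0.92129`. -/
noncomputable def chebA : ℝ :=
  Real.log 2 / 2 + Real.log 3 / 3 + Real.log 5 / 5 - Real.log 30 / 30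

lemma chebA_pos : 0 < chebA := by
  have h2 : 0 < Real.log 2 := Real.log_pos (by norm_num)
  have h3 : 0 < Real.log 3 := Real.log_pos (by norm_num)
  have h5 : 0 < Real.log 5 := Real.log_pos (by norm_num)
  have h : Real.log 30 = Real.log 2 + Real.log 3 + Real.log 5 := by
    rw [← Real.log_mul (by norm_num) (by norm_num), ← Real.log_mul (by norm_num) (by norm_num)]
    norm_num
  unfold chebA
  linarith

open ArithmeticFunction in
/-- Legendre's identity `log M! = ∑ Λ(d) ⌊M/d⌋`; the terms with `M < d ≤ N` vanish, which lets all
factorials in `chebF` be summed over the same range. -/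
lemma log_factorial_eq_sum (M N : ℕ) (h : M ≤ N) :
    Real.log (M.factorial) = ∑ d ∈ Finset.Ioc 0 N, vonMangoldt d * ((M / d : ℕ) : ℝ) := by
  induction M with
  | zero => simp
  | succ M ih =>
    have hdiv : (M + 1).divisors = (Finset.Ioc 0 N).filter (fun d => d ∣ M + 1) := by
      ext d
      simp only [Nat.mem_divisors, Finset.mem_filter, Finset.mem_Ioc]
      constructor
      · rintro ⟨hd, -⟩
        exact ⟨⟨Nat.pos_of_dvd_of_pos hd M.succ_pos, (Nat.le_of_dvd M.succ_pos hd).trans h⟩, hd⟩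
      · rintro ⟨-, hd⟩
        exact ⟨hd, M.succ_ne_zero⟩
    have hL : ∑ d ∈ Finset.Ioc 0 N, (if d ∣ M + 1 then vonMangoldt d else 0)
        = Real.log ((M + 1 : ℕ) : ℝ) := by
      rw [← Finset.sum_filter, ← hdiv, vonMangoldt_sum]
    rw [Nat.factorial_succ, Nat.cast_mul, Real.log_mul (by positivity) (by positivity),
      ih (by omega), ← hL, ← Finset.sum_add_distrib]
    refine Finset.sum_congr rfl fun d _ => ?_
    rw [Nat.succ_div]
    split_ifs <;> push_cast <;> ring

open ArithmeticFunction in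
lemma chebF_eq_sum (N : ℕ) :
    chebF N = ∑ d ∈ Finset.Ioc 0 N, vonMangoldt d *
      (((N / d : ℕ) : ℝ) - ((N / d / 2 : ℕ) : ℝ) - ((N / d / 3 : ℕ) : ℝ)
        - ((N / d / 5 : ℕ) : ℝ) + ((N / d / 30 : ℕ) : ℝ)) := by
  unfold chebF
  rw [log_factorial_eq_sum N N le_rfl, log_factorial_eq_sum (N / 2) N (Nat.div_le_self _ _),
    log_factorial_eq_sum (N / 3) N (Nat.div_le_self _ _),
    log_factorial_eq_sum (N / 5) N (Nat.div_le_self _ _),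
    log_factorial_eq_sum (N / 30) N (Nat.div_le_self _ _),
    ← Finset.sum_sub_distrib, ← Finset.sum_sub_distrib, ← Finset.sum_sub_distrib,
    ← Finset.sum_add_distrib]
  refine Finset.sum_congr rfl fun d _ => ?_
  rw [Nat.div_right_comm N 2 d, Nat.div_right_comm N 3 d, Nat.div_right_comm N 5 d,
    Nat.div_right_comm N 30 d]
  ring

/-- The integer-valued multiplier in Chebyshev's identity only takes the values `0` and `1`. -/
lemma floor_comb_bounds (m : ℕ) :
    (0 : ℝ) ≤ (m : ℝ) - ((m / 2 : ℕ) : ℝ) - ((m / 3 : ℕ) : ℝ)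
        - ((m / 5 : ℕ) : ℝ) + ((m / 30 : ℕ) : ℝ) ∧
    (m : ℝ) - ((m / 2 : ℕ) : ℝ) - ((m / 3 : ℕ) : ℝ)
        - ((m / 5 : ℕ) : ℝ) + ((m / 30 : ℕ) : ℝ) ≤ 1 := by
  constructor
  · have : m / 2 + m / 3 + m / 5 ≤ m + m / 30 := by omega
    have : ((m / 2 : ℕ) : ℝ) + ((m / 3 : ℕ) : ℝ) + ((m / 5 : ℕ) : ℝ) ≤ m + ((m / 30 : ℕ) : ℝ) := by
      exact_mod_cast this
    linarith
  · have : m + m / 30 ≤ m / 2 + m / 3 + m / 5 + 1 := by omega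
    have : (m : ℝ) + ((m / 30 : ℕ) : ℝ) ≤ ((m / 2 : ℕ) : ℝ) + ((m / 3 : ℕ) : ℝ)
      + ((m / 5 : ℕ) : ℝ) + 1 := by exact_mod_cast this
    linarith

open Chebyshev ArithmeticFunction in
lemma chebF_le_psi (N : ℕ) : chebF N ≤ psi N := by
  rw [chebF_eq_sum, psi, Nat.floor_natCast]
  refine Finset.sum_le_sum fun d _ => ?_
  exact mul_le_of_le_one_right vonMangoldt_nonneg (floor_comb_bounds _).2

open Chebyshev ArithmeticFunction in
/-- The multiplier equals `1` for `N / 6 < d ≤ N`, where `1 ≤ N / d ≤ 5`. -/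
lemma psi_le_chebF_add (N : ℕ) : psi N ≤ chebF N + psi (N / 6 : ℕ) := by
  have hsplit : psi (N : ℝ) = ∑ d ∈ Finset.Ioc 0 N, (if d ≤ N / 6 then vonMangoldt d else 0)
      + ∑ d ∈ Finset.Ioc 0 N, (if d ≤ N / 6 then 0 else vonMangoldt d) := by
    rw [psi, Nat.floor_natCast, ← Finset.sum_add_distrib]
    refine Finset.sum_congr rfl fun d _ => ?_
    split_ifs <;> simp
  have h6 : ∑ d ∈ Finset.Ioc 0 N, (if d ≤ N / 6 then vonMangoldt d else 0)
      = psi ((N / 6 : ℕ) : ℝ) := by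
    rw [psi, Nat.floor_natCast, ← Finset.sum_filter]
    refine Finset.sum_congr ?_ fun _ _ => rfl
    ext d
    simp only [Finset.mem_filter, Finset.mem_Ioc]
    omega
  rw [hsplit, h6, add_comm, chebF_eq_sum]
  gcongr with d hd
  split_ifs with h
  · exact mul_nonneg vonMangoldt_nonneg (floor_comb_bounds _).1
  · rw [Finset.mem_Ioc] at hd
    have h1 : 1 ≤ N / d := (Nat.one_le_div_iff hd.1).2 hd.2
    have h2 : N / d < 6 := by
      rw [Nat.div_lt_iff_lt_mul hd.1]
      omega
    have : N / d + N / d / 30 = N / d / 2 + N / d / 3 + N / d / 5 + 1 := by omega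
    have : ((N / d : ℕ) : ℝ) + ((N / d / 30 : ℕ) : ℝ) = ((N / d / 2 : ℕ) : ℝ)
      + ((N / d / 3 : ℕ) : ℝ) + ((N / d / 5 : ℕ) : ℝ) + 1 := by exact_mod_cast this
    refine le_of_eq ?_
    rw [show ((N / d : ℕ) : ℝ) - ((N / d / 2 : ℕ) : ℝ) - ((N / d / 3 : ℕ) : ℝ)
        - ((N / d / 5 : ℕ) : ℝ) + ((N / d / 30 : ℕ) : ℝ) = 1 by linarith, mul_one]

/-! ### Asymptotics of the factorial combination -/

open Filter Topology in
/-- Stirling's formula in the weak form `log m! = m log m - m + o(m)`. -/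
lemma tendsto_log_factorial :
    Tendsto (fun m : ℕ => Real.log (m.factorial) / m - Real.log m) atTop (𝓝 (-1)) := by
  have hlog : Tendsto (fun m : ℕ => Real.log m / m) atTop (𝓝 0) :=
    (Real.isLittleO_log_id_atTop.tendsto_div_nhds_zero).comp tendsto_natCast_atTop_atTop
  have hs : Tendsto (fun m : ℕ => Real.log (Stirling.stirlingSeq m)) atTop
      (𝓝 (Real.log √Real.pi)) :=
    Stirling.tendsto_stirlingSeq_sqrt_pi.log (by positivity)
  have h1 : Tendsto (fun m : ℕ => (Real.log (Stirling.stirlingSeq m) + 1 / 2 * Real.log 2) / m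
      + 1 / 2 * (Real.log m / m) - 1) atTop (𝓝 (0 + 1 / 2 * 0 - 1)) :=
    (((hs.add_const _).div_atTop tendsto_natCast_atTop_atTop).add
      (hlog.const_mul _)).sub_const _
  norm_num at h1
  refine h1.congr' ?_
  filter_upwards [eventually_gt_atTop 0] with m hm
  have hm' : (0 : ℝ) < m := by exact_mod_cast hm
  rw [Stirling.log_stirlingSeq_formula, Real.log_mul (by norm_num) hm'.ne',
    Real.log_div hm'.ne' (Real.exp_pos 1).ne', Real.log_exp]
  field_simp
  ring

open Filter Topology in
lemma tendsto_natDiv_div (k : ℕ) (hk : 0 < k) :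
    Tendsto (fun N : ℕ => ((N / k : ℕ) : ℝ) / N) atTop (𝓝 (1 / k)) := by
  have h := (tendsto_nat_floor_mul_div_atTop (R := ℝ) (a := 1 / k) (by positivity)).comp
    (tendsto_natCast_atTop_atTop (R := ℝ))
  refine h.congr fun N => ?_
  simp only [Function.comp]
  rw [one_div_mul_eq_div, Nat.floor_div_eq_div]

open Filter Topology in
lemma tendsto_log_factorial_natDiv (k : ℕ) (hk : 0 < k) :
    Tendsto (fun N : ℕ => Real.log ((N / k).factorial) / N
      - ((N / k : ℕ) : ℝ) / N * Real.log N) atTop (𝓝 (1 / k * (-1 - Real.log k))) := by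
  have hk' : (0 : ℝ) < k := by exact_mod_cast hk
  have h1 := tendsto_natDiv_div k hk
  have h2 := tendsto_log_factorial.comp (Nat.tendsto_div_const_atTop hk.ne')
  have h3 : Tendsto (fun N : ℕ => Real.log (((N / k : ℕ) : ℝ) / N)) atTop
      (𝓝 (Real.log (1 / k))) := h1.log (by positivity)
  have h4 := h1.mul (h2.add h3)
  rw [one_div, Real.log_inv, ← one_div, ← sub_eq_add_neg] at h4
  refine h4.congr' ?_
  filter_upwards [eventually_ge_atTop k] with N hN
  have hN0 : (0 : ℝ) < N := by exact_mod_cast hk.trans_le hN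
  have hq : (0 : ℝ) < ((N / k : ℕ) : ℝ) := by exact_mod_cast Nat.div_pos hN hk
  simp only [Function.comp]
  rw [Real.log_div hq.ne' hN0.ne']
  field_simp
  ring

open Filter Topology in
lemma tendsto_chebF : Tendsto (fun N : ℕ => chebF N / N) atTop (𝓝 chebA) := by
  have t1 := tendsto_log_factorial_natDiv 1 (by norm_num)
  have t2 := tendsto_log_factorial_natDiv 2 (by norm_num)
  have t3 := tendsto_log_factorial_natDiv 3 (by norm_num)
  have t5 := tendsto_log_factorial_natDiv 5 (by norm_num)
  have t30 := tendsto_log_factorial_natDiv 30 (by norm_num)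
  have hlog : Tendsto (fun m : ℕ => Real.log m / m) atTop (𝓝 0) :=
    (Real.isLittleO_log_id_atTop.tendsto_div_nhds_zero).comp tendsto_natCast_atTop_atTop
  -- The `N log N` terms cancel up to a multiplier in `[0, 1]`, leaving only `O(log N)`.
  have hr : Tendsto (fun N : ℕ => ((N : ℝ) - ((N / 2 : ℕ) : ℝ) - ((N / 3 : ℕ) : ℝ)
        - ((N / 5 : ℕ) : ℝ) + ((N / 30 : ℕ) : ℝ)) * (Real.log N / N)) atTop (𝓝 0) := by
    refine squeeze_zero (fun N => ?_) (fun N => ?_) hlog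
    · exact mul_nonneg (floor_comb_bounds N).1 (by positivity)
    · exact mul_le_of_le_one_left (by positivity) (floor_comb_bounds N).2
  have h := ((((t1.sub t2).sub t3).sub t5).add t30).add hr
  convert h using 2 with N
  · simp only [chebF, Nat.div_one]
    ring
  · simp only [chebA]
    push_cast
    rw [Real.log_one]
    ring

/-! ### Bounds for `ψ` and `π` -/

open Filter Topology Chebyshev in
lemma psi_lower : ∀ᶠ N : ℕ in atTop, 0.99 * chebA * N ≤ psi N := by
  have hA := chebA_pos
  filter_upwards [tendsto_chebF.eventually_const_lt (show 0.99 * chebA < chebA by linarith),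
    eventually_gt_atTop 0] with N hN h0
  have h0' : (0 : ℝ) < N := by exact_mod_cast h0
  rw [lt_div_iff₀ h0'] at hN
  exact hN.le.trans (chebF_le_psi N)

open Filter Topology Chebyshev in
/-- Iterating `ψ(N) ≤ F(N) + ψ(N/6)` with `F(N) ≤ 1.02 A N` gives the constant
`1.02 * 6 / 5 = 1.224`; `C` absorbs the finitely many `N` where the bound on `F` may fail. -/
lemma psi_upper : ∃ C : ℝ, 0 ≤ C ∧ ∀ N : ℕ, psi N ≤ 1.224 * chebA * N + C := by
  have hA := chebA_pos
  obtain ⟨N₀, hN₀⟩ := eventually_atTop.1 ((tendsto_chebF.eventually_lt_const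
    (show chebA < 1.02 * chebA by linarith)).and (eventually_gt_atTop 0))
  refine ⟨psi N₀, psi_nonneg _, fun N => ?_⟩
  induction N using Nat.strong_induction_on with
  | _ N ih =>
    by_cases h : N < N₀
    · have h1 : psi (N : ℝ) ≤ psi N₀ := psi_mono (by exact_mod_cast h.le)
      have : 0 ≤ 1.224 * chebA * N := by positivity
      linarith
    · obtain ⟨h1, h0⟩ := hN₀ N (by omega)
      have h0' : (0 : ℝ) < N := by exact_mod_cast h0
      rw [div_lt_iff₀ h0'] at h1
      have h2 := ih (N / 6) (by omega)
      have h3 : ((N / 6 : ℕ) : ℝ) ≤ N / 6 := Nat.cast_div_le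
      have h4 : 1.224 * chebA * ((N / 6 : ℕ) : ℝ) ≤ 1.224 * chebA * (N / 6) := by gcongr
      have h5 := psi_le_chebF_add N
      linarith

open Chebyshev in
/-- Primes up to `B` are counted trivially; each larger one contributes at least `log B` to
`ψ`. -/
lemma primeCounting_le_split (M : ℕ) (B : ℝ) (hB : 1 < B) :
    (M.primeCounting : ℝ) ≤ B + psi M / Real.log B := by
  have hl : 0 < Real.log B := Real.log_pos hB
  have hsplit := Finset.card_filter_add_card_filter_not (s := Nat.primesLE M)
    (fun p : ℕ => (p : ℝ) ≤ B)
  rw [Nat.primesLE_card_eq_primeCounting] at hsplit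
  have h1 : (((Nat.primesLE M).filter (fun p : ℕ => (p : ℝ) ≤ B)).card : ℝ) ≤ B := by
    refine le_trans ?_ (Nat.floor_le (zero_le_one.trans hB.le))
    norm_cast
    rw [show ⌊B⌋₊ = (Finset.Icc 1 ⌊B⌋₊).card by simp]
    refine Finset.card_le_card fun p hp => ?_
    simp only [Finset.mem_filter, Finset.mem_Icc, Nat.mem_primesLE] at hp ⊢
    exact ⟨hp.1.2.one_le, Nat.le_floor hp.2⟩
  have h2 : (((Nat.primesLE M).filter (fun p : ℕ => ¬ (p : ℝ) ≤ B)).card : ℝ)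
      ≤ psi M / Real.log B := by
    rw [le_div_iff₀ hl]
    refine le_trans ?_ (theta_le_psi M)
    rw [theta_eq_sum_primesLE_log, ← nsmul_eq_mul, ← Finset.sum_const]
    calc _ ≤ ∑ p ∈ (Nat.primesLE M).filter (fun p : ℕ => ¬ (p : ℝ) ≤ B), Real.log p := by
          refine Finset.sum_le_sum fun p hp => ?_
          rw [Finset.mem_filter, not_le] at hp
          exact Real.log_le_log (zero_lt_one.trans hB) hp.2.le
      _ ≤ _ := Finset.sum_le_sum_of_subset_of_nonneg (Finset.filter_subset _ _)
          fun p _ _ => Real.log_natCast_nonneg p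
  rw [← hsplit]
  push_cast
  linarith

/-! ### Counting SP numbers -/

/-- Each SP number `p * a ^ 2 ≤ n` comes from some `a ≤ n` and a prime `p ≤ n / a ^ 2`
(floor division). -/
lemma SPCount_le_sum (n : ℕ) :
    SPCount n ≤ ∑ a ∈ Finset.Icc 2 n, (n / a ^ 2).primeCounting := by
  classical
  unfold SPCount
  calc _ ≤ ((Finset.Icc 2 n).biUnion
        fun a => (Nat.primesLE (n / a ^ 2)).image (· * a ^ 2)).card := by
        refine Finset.card_le_card fun m hm => ?_
        simp only [Finset.mem_filter, Finset.mem_range] at hm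
        obtain ⟨hmn, p, a, hp, ha, rfl⟩ := hm
        simp only [Finset.mem_biUnion, Finset.mem_image, Finset.mem_Icc, Nat.mem_primesLE]
        have hpa : p * a ^ 2 ≤ n := by omega
        refine ⟨a, ⟨ha, ?_⟩, p, ⟨?_, hp⟩, rfl⟩
        · nlinarith [hp.one_le, Nat.mul_le_mul hp.one_le (le_refl (a ^ 2))]
        · rwa [Nat.le_div_iff_mul_le (by positivity)]
    _ ≤ ∑ a ∈ Finset.Icc 2 n, ((Nat.primesLE (n / a ^ 2)).image (· * a ^ 2)).card :=
        Finset.card_biUnion_le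
    _ ≤ _ := by
        refine Finset.sum_le_sum fun a _ => ?_
        rw [← Nat.primesLE_card_eq_primeCounting]
        exact Finset.card_image_le

/-- The bound `3 / 4` comes from the term `a = 2` and telescoping the rest against
`1 / (a - 1) - 1 / a`. -/
lemma sum_inv_sq_le (D : ℕ) : ∑ a ∈ Finset.Icc 2 D, (1 : ℝ) / (a : ℝ) ^ 2 ≤ 3 / 4 := by
  rcases lt_or_ge D 2 with h | h
  · rw [Finset.Icc_eq_empty (by omega)]
    norm_num
  · suffices ∑ a ∈ Finset.Icc 2 D, (1 : ℝ) / (a : ℝ) ^ 2 ≤ 3 / 4 - 1 / D by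
      have : (0 : ℝ) ≤ 1 / D := by positivity
      linarith
    induction D, h using Nat.le_induction with
    | base => norm_num
    | succ D h ih =>
      rw [Finset.sum_Icc_succ_top (by omega)]
      have hD : (0 : ℝ) < D := by exact_mod_cast (by omega : 0 < D)
      have : (1 : ℝ) / ((D : ℝ) + 1) ^ 2 ≤ 1 / D - 1 / (D + 1) := by
        rw [div_sub_div _ _ (by positivity) (by positivity),
          div_le_div_iff₀ (by positivity) (by positivity)]
        nlinarith
      push_cast
      linarith

lemma primeCounting_le_self' (M : ℕ) : M.primeCounting ≤ M := by
  rw [← Nat.primesLE_card_eq_primeCounting, Nat.primesLE_eq_filter_Ioc_zero]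
  exact (Finset.card_filter_le _ _).trans (by simp)

/-- The sum over `a` is split at `D`: large `a` are bounded trivially, small `a` by the Chebyshev
bound, where `0.918 = 1.224 * 3 / 4`. -/
lemma SPCount_bound {C : ℝ} (hC0 : 0 ≤ C)
    (hC : ∀ N : ℕ, Chebyshev.psi N ≤ 1.224 * chebA * N + C)
    (n D : ℕ) (hD : 1 ≤ D) (hDn : D ≤ n) (B : ℝ) (hB : 1 < B) :
    (SPCount n : ℝ) ≤ n / D + D * B + (0.918 * chebA * n + C * D) / Real.log B := by
  have hA := chebA_pos
  have hl : 0 < Real.log B := Real.log_pos hB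
  have hle : ∑ a ∈ Finset.Icc 2 n, ((n / a ^ 2).primeCounting : ℝ)
      ≤ ∑ a ∈ Finset.Icc 2 D, ((n / a ^ 2).primeCounting : ℝ)
        + ∑ a ∈ Finset.Ioc D n, ((n / a ^ 2).primeCounting : ℝ) := by
    rw [← Finset.sum_union (by
      rw [Finset.disjoint_left]
      intro a
      simp only [Finset.mem_Icc, Finset.mem_Ioc]
      omega)]
    refine Finset.sum_le_sum_of_subset_of_nonneg (fun a => ?_) fun _ _ _ => Nat.cast_nonneg _
    simp only [Finset.mem_union, Finset.mem_Icc, Finset.mem_Ioc]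
    omega
  have h1 : ∑ a ∈ Finset.Ioc D n, ((n / a ^ 2).primeCounting : ℝ) ≤ n / D := by
    calc _ ≤ ∑ a ∈ Finset.Ioc D n, (n : ℝ) * ((a : ℝ) ^ 2)⁻¹ := by
          refine Finset.sum_le_sum fun a _ => ?_
          calc ((n / a ^ 2).primeCounting : ℝ) ≤ ((n / a ^ 2 : ℕ) : ℝ) := by
                exact_mod_cast primeCounting_le_self' _
            _ ≤ (n : ℝ) / ((a ^ 2 : ℕ) : ℝ) := Nat.cast_div_le
            _ = _ := by push_cast; rw [div_eq_mul_inv]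
      _ = n * ∑ a ∈ Finset.Ioc D n, ((a : ℝ) ^ 2)⁻¹ := by rw [Finset.mul_sum]
      _ ≤ n * ((D : ℝ)⁻¹ - (n : ℝ)⁻¹) := by
          gcongr
          exact sum_Ioc_inv_sq_le_sub (by omega) hDn
      _ ≤ n * (D : ℝ)⁻¹ := by
          gcongr
          have : (0 : ℝ) ≤ (n : ℝ)⁻¹ := by positivity
          linarith
      _ = _ := by rw [div_eq_mul_inv]
  have h2 : ∑ a ∈ Finset.Icc 2 D, ((n / a ^ 2).primeCounting : ℝ)
      ≤ D * B + (0.918 * chebA * n + C * D) / Real.log B := by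
    have hcard : ((Finset.Icc 2 D).card : ℝ) ≤ D := by
      rw [Nat.card_Icc]
      exact_mod_cast (by omega : D + 1 - 2 ≤ D)
    calc _ ≤ ∑ a ∈ Finset.Icc 2 D,
            ((B + C / Real.log B) + 1.224 * chebA * n / Real.log B * (1 / (a : ℝ) ^ 2)) := by
          refine Finset.sum_le_sum fun a _ => ?_
          have hq : ((n / a ^ 2 : ℕ) : ℝ) ≤ (n : ℝ) / (a : ℝ) ^ 2 := by
            exact_mod_cast (Nat.cast_div_le : ((n / a ^ 2 : ℕ) : ℝ) ≤ (n : ℝ) / ((a ^ 2 : ℕ) : ℝ))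
          calc _ ≤ B + Chebyshev.psi ((n / a ^ 2 : ℕ) : ℝ) / Real.log B :=
                primeCounting_le_split _ B hB
            _ ≤ B + (1.224 * chebA * ((n : ℝ) / (a : ℝ) ^ 2) + C) / Real.log B := by
                gcongr
                exact (hC _).trans (by gcongr)
            _ = _ := by ring
      _ = (Finset.Icc 2 D).card * (B + C / Real.log B) + 1.224 * chebA * n / Real.log B *
            ∑ a ∈ Finset.Icc 2 D, (1 : ℝ) / (a : ℝ) ^ 2 := by
          rw [Finset.sum_add_distrib, Finset.sum_const, nsmul_eq_mul, Finset.mul_sum]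
      _ ≤ D * (B + C / Real.log B) + 1.224 * chebA * n / Real.log B * (3 / 4) := by
          gcongr
          exact sum_inv_sq_le D
      _ = _ := by ring
  have h0 : (SPCount n : ℝ) ≤ ∑ a ∈ Finset.Icc 2 n, ((n / a ^ 2).primeCounting : ℝ) := by
    exact_mod_cast SPCount_le_sum n
  linarith

open Filter Topology in
/-- Eventually, the number of SP numbers up to `n` is strictly smaller than the
number of primes up to `n`. -/
theorem SPCount_lt_primeCounting_eventually :
    ∃ N : ℕ, ∀ n : ℕ, N ≤ n → SPCount n < Nat.primeCounting n := by
  have hA := chebA_pos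
  obtain ⟨C, hC0, hC⟩ := psi_upper
  rw [← eventually_atTop]
  have hlog : ∀ᶠ n : ℕ in atTop, Real.log n ≤ 0.003 * chebA * (n : ℝ) ^ (0.01 : ℝ) := by
    have h := ((isLittleO_log_rpow_atTop (r := 0.01) (by norm_num)).bound
      (show 0 < 0.003 * chebA by positivity))
    filter_upwards [tendsto_natCast_atTop_atTop.eventually h] with n hn
    rw [Real.norm_of_nonneg (by positivity), Real.norm_of_nonneg (by positivity)] at hn
    exact hn
  have hCl : ∀ᶠ n : ℕ in atTop, C ≤ Real.log n :=
    (Real.tendsto_log_atTop.comp tendsto_natCast_atTop_atTop).eventually_ge_atTop C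
  filter_upwards [hlog, hCl, psi_lower, eventually_ge_atTop 2] with n hlog hCl hlow hn
  have hn1 : (1 : ℝ) < n := by exact_mod_cast hn
  have hn0 : (0 : ℝ) < n := by linarith
  have hL : 0 < Real.log n := Real.log_pos hn1
  set L := Real.log n with hLdef
  set x : ℝ := (n : ℝ) ^ (0.01 : ℝ) with hx
  have hx1 : 1 ≤ x := Real.one_le_rpow hn1.le (by norm_num)
  have hxn : x ≤ n := by
    calc x ≤ (n : ℝ) ^ (1 : ℝ) := Real.rpow_le_rpow_of_exponent_le hn1.le (by norm_num)
      _ = n := Real.rpow_one _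
  have hD1 : 1 ≤ ⌈x⌉₊ := Nat.one_le_ceil_iff.2 (by linarith)
  have hDn : ⌈x⌉₊ ≤ n := Nat.ceil_le.2 hxn
  have hDx : x ≤ (⌈x⌉₊ : ℝ) := Nat.le_ceil x
  have hD2 : (⌈x⌉₊ : ℝ) ≤ 2 * x := by
    have := Nat.ceil_lt_add_one (show 0 ≤ x by linarith)
    linarith
  have hB : 1 < (n : ℝ) ^ (0.95 : ℝ) := Real.one_lt_rpow hn1 (by norm_num)
  have hmain := SPCount_bound hC0 hC n ⌈x⌉₊ hD1 hDn _ hB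
  rw [Real.log_rpow hn0, ← hLdef] at hmain
  -- `y = n ^ 0.99` dominates every error term up to the factor `L`.
  set y : ℝ := (n : ℝ) ^ (0.99 : ℝ) with hy
  have hyx : y * x = n := by
    rw [hx, hy, ← Real.rpow_add hn0]
    norm_num
  have e1 : (n : ℝ) / ⌈x⌉₊ ≤ y := by
    rw [div_le_iff₀ (by linarith), ← hyx]
    gcongr
  have e2 : (⌈x⌉₊ : ℝ) * (n : ℝ) ^ (0.95 : ℝ) ≤ 2 * y := by
    calc (⌈x⌉₊ : ℝ) * (n : ℝ) ^ (0.95 : ℝ) ≤ 2 * x * (n : ℝ) ^ (0.95 : ℝ) := by gcongr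
      _ = 2 * (n : ℝ) ^ (0.96 : ℝ) := by
          rw [hx, mul_assoc, ← Real.rpow_add hn0]
          norm_num
      _ ≤ 2 * y := by
          gcongr
          exact Real.rpow_le_rpow_of_exponent_le hn1.le (by norm_num)
  have hxy : x ≤ y := Real.rpow_le_rpow_of_exponent_le hn1.le (by norm_num)
  have e3 : C * (⌈x⌉₊ : ℝ) ≤ L * (2 * y) := by
    gcongr
    linarith
  have e4 : L * y ≤ 0.003 * chebA * n := by
    calc L * y ≤ 0.003 * chebA * x * y := by gcongr
      _ = 0.003 * chebA * n := by rw [← hyx]; ring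
  have hpi : 0.99 * chebA * n ≤ n.primeCounting * L :=
    hlow.trans (Chebyshev.psi_le_primeCounting_mul_log n)
  have hS : (SPCount n : ℝ) * L < n.primeCounting * L := by
    calc (SPCount n : ℝ) * L
        ≤ (y + 2 * y + (0.918 * chebA * n + L * (2 * y)) / (0.95 * L)) * L := by
          gcongr
          refine hmain.trans ?_
          gcongr
      _ = 3 * (L * y) + (0.918 * chebA * n + 2 * (L * y)) / 0.95 := by
          field_simp
          ring
      _ ≤ 3 * (0.003 * chebA * n)
            + (0.918 * chebA * n + 2 * (0.003 * chebA * n)) / 0.95 := by gcongr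
      _ < 0.99 * chebA * n := by
          have h : 0 < chebA * n := by positivity
          calc _ = (3 * 0.003 + (0.918 + 2 * 0.003) / 0.95) * (chebA * n) := by ring
            _ < 0.99 * (chebA * n) := mul_lt_mul_of_pos_right (by norm_num) h
            _ = _ := by ring
      _ ≤ _ := hpi
  exact_mod_cast lt_of_mul_lt_mul_right hS hL.le
end

section
/- The sequence of normalized SP numbers is uniformly distributed in [0,1]: for every pair of real numbers α, β with 0 ≤ α < β ≤ 1, the ratio (number of SP numbers s ≤ j with s/j ∈ [α, β]) divided by SP(j) tends to β − α as j tends to infinity. -/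
/-!
SP numbers are equidistributed because their counting function is regularly varying with index one:
`SP(γ x) / SP(x) → γ` for `0 ≤ γ ≤ 1` (`tendsto_SPCount_ratio`). The count in `[α, β]` is
`SP(β j) - SP(α j)` up to one endpoint, and `SP(j) → ∞`.

The factorization `p * a ^ 2` of an SP number is unique, so `SP(n) = ∑_{a ≥ 2} π(n / a ^ 2)`
(`SPCount_eq_sum`), and regular variation is inherited from the prime counting function `π`. In the
terms with `n / a ^ 2` bounded, at most `√n` in number, it may fail, but these contribute only
`O(√n)`, which is negligible against `SP(n) ≥ π(n / 4)`.

Regular variation of `π` follows from the prime number theorem, which is derived here by the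
Wiener–Ikehara method. As `ζ` does not vanish on `re s = 1`, the Laplace transform of
`e^{-u} ψ(e^u) - 1` extends continuously to the boundary of its half-plane of convergence.
Integrating it against a tent function and letting the abscissa tend to the boundary
(`integral_psiNorm_fejer`) expresses the Fejér means of `e^{-u} ψ(e^u) - 1` as Fourier transforms of
compactly supported integrable functions, so that they tend to zero by the Riemann–Lebesgue lemma
(`tendsto_integral_psiNorm_sub_one_fejer`). Since `ψ` is monotone, `e^{-u} ψ(e^u)` cannot oscillate
on short intervals, and it converges to `1` itself (`tendsto_psiNorm`).
-/

open Filter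

/-! ### The logarithmic derivative of the zeta function on `re s ≥ 1` -/

/-- The continuous extension of `-ζ'(s)/ζ(s) - 1/(s-1)` to the closed half-plane `re s ≥ 1`, which
exists because `ζ` has no zeros there. It is encoded as Mathlib's auxiliary function for the von Mangoldt
function in residue classes, taken for the trivial modulus `1`. -/
noncomputable def zetaAux (s : ℂ) : ℂ :=
  ArithmeticFunction.vonMangoldt.LFunctionResidueClassAux (q := 1) (1 : ZMod 1) s

lemma continuousOn_zetaAux : ContinuousOn zetaAux {s | 1 ≤ s.re} :=
  ArithmeticFunction.vonMangoldt.continuousOn_LFunctionResidueClassAux (1 : ZMod 1)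

lemma zetaAux_eq {s : ℂ} (hs : 1 < s.re) :
    zetaAux s = LSeries (fun n => (ArithmeticFunction.vonMangoldt n : ℂ)) s - 1 / (s - 1) := by
  have h := ArithmeticFunction.vonMangoldt.eqOn_LFunctionResidueClassAux
    (q := 1) (a := (1 : ZMod 1)) isUnit_one hs
  rw [zetaAux, h]
  have h2 : (fun n => (ArithmeticFunction.vonMangoldt.residueClass (1 : ZMod 1) n : ℂ)) =
      fun n => (ArithmeticFunction.vonMangoldt n : ℂ) := by
    funext n
    have : ((n : ZMod 1) = 1) := Subsingleton.elim _ _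
    simp [ArithmeticFunction.vonMangoldt.residueClass, Set.indicator, this]
  simp only [h2]
  simp

/-! ### The Laplace transform of the normalized Chebyshev function -/

lemma psi_eq_sum_Icc_one (n : ℕ) :
    ∑ k ∈ Finset.Icc 1 n, ArithmeticFunction.vonMangoldt k = Chebyshev.psi n := by
  rw [Chebyshev.psi, Nat.floor_natCast, ← Finset.Icc_add_one_left_eq_Ioc]
  rfl

lemma LSeries_vonMangoldt_eq_integral {s : ℂ} (hs : 1 < s.re) :
    LSeries (fun n => (ArithmeticFunction.vonMangoldt n : ℂ)) s =
      s * ∫ t in Set.Ioi (1 : ℝ), (Chebyshev.psi t : ℂ) * (t : ℂ) ^ (-(s + 1)) := by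
  rw [LSeries_eq_mul_integral_of_nonneg (fun n => ArithmeticFunction.vonMangoldt n)
    (r := 1) zero_le_one hs]
  · congr 2
    funext t
    rw [Chebyshev.psi_eq_psi_coe_floor, ← psi_eq_sum_Icc_one]
    push_cast
    rfl
  · refine Asymptotics.IsBigO.of_bound (Real.log 4 + 4) (Eventually.of_forall fun n => ?_)
    rw [psi_eq_sum_Icc_one, Real.norm_of_nonneg (Chebyshev.psi_nonneg _), Real.rpow_one,
      Real.norm_of_nonneg (Nat.cast_nonneg _)]
    exact Chebyshev.psi_le_const_mul_self (Nat.cast_nonneg _)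
  · exact fun _ => ArithmeticFunction.vonMangoldt_nonneg

/-- The normalized Chebyshev function `e^{-u} ψ(e^u)`. -/
noncomputable def psiNorm (u : ℝ) : ℝ := Chebyshev.psi (Real.exp u) * Real.exp (-u)

lemma psiNorm_nonneg (u : ℝ) : 0 ≤ psiNorm u :=
  mul_nonneg (Chebyshev.psi_nonneg _) (Real.exp_pos _).le

lemma psiNorm_le (u : ℝ) : psiNorm u ≤ Real.log 4 + 4 := by
  have h := Chebyshev.psi_le_const_mul_self (Real.exp_pos u).le
  calc psiNorm u ≤ (Real.log 4 + 4) * Real.exp u * Real.exp (-u) := by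
        unfold psiNorm; gcongr
    _ = _ := by rw [mul_assoc, ← Real.exp_add]; simp

lemma psiNorm_of_nonpos {u : ℝ} (hu : u ≤ 0) : psiNorm u = 0 := by
  rw [psiNorm, Chebyshev.psi_eq_zero_of_le_one (Real.exp_le_one_iff.mpr hu), zero_mul]

lemma measurable_psiNorm : Measurable psiNorm :=
  (Chebyshev.psi_mono.measurable.comp Real.measurable_exp).mul
    (Real.measurable_exp.comp measurable_neg)

lemma abs_psiNorm_sub_one_le (u : ℝ) : |psiNorm u - 1| ≤ Real.log 4 + 5 := by
  have h1 := psiNorm_nonneg u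
  have h2 := psiNorm_le u
  have : 0 ≤ Real.log 4 := Real.log_nonneg (by norm_num)
  rw [abs_le]; constructor <;> linarith

/-- The continuous extension to `re s ≥ 1` of the Laplace transform of `psiNorm - 1`, in the
variable `s = 1 + z`; see `integral_psiNorm_sub_one_mul_exp`. -/
noncomputable def laplaceExt (s : ℂ) : ℂ := (zetaAux s - 1) / s

lemma continuousOn_laplaceExt : ContinuousOn laplaceExt {s | 1 ≤ s.re} := by
  refine (continuousOn_zetaAux.sub continuousOn_const).div continuousOn_id fun s hs h => ?_
  simp only [Set.mem_ofPred_eq] at hs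
  rw [show s = 0 from h] at hs
  norm_num at hs

open MeasureTheory

lemma integrableOn_exp_neg {z : ℂ} (hz : 0 < z.re) :
    IntegrableOn (fun u : ℝ => Complex.exp (-z * u)) (Set.Ioi 0) :=
  integrableOn_exp_mul_complex_Ioi (by simpa using hz) 0

lemma integrableOn_psiNorm_sub_one_mul_exp {z : ℂ} (hz : 0 < z.re) :
    IntegrableOn (fun u : ℝ => ((psiNorm u - 1 : ℝ) : ℂ) * Complex.exp (-z * u)) (Set.Ioi 0) := by
  refine (integrableOn_exp_neg hz).bdd_mul
    (measurable_psiNorm.sub_const 1).complex_ofReal.aestronglyMeasurable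
    (c := Real.log 4 + 5) (Eventually.of_forall fun u => ?_)
  rw [Complex.norm_real]
  exact abs_psiNorm_sub_one_le u

/-- The substitution `t = e^u` turns the integral representation of `-ζ'/ζ` into the Laplace
transform of `psiNorm`; subtracting `1` from `psiNorm` removes the pole at `z = 0`. -/
lemma integral_psiNorm_sub_one_mul_exp {z : ℂ} (hz : 0 < z.re) :
    ∫ u : ℝ in Set.Ioi 0, ((psiNorm u - 1 : ℝ) : ℂ) * Complex.exp (-z * u) =
      laplaceExt (1 + z) := by
  have hs : 1 < (1 + z).re := by simpa using hz
  have hz0 : z ≠ 0 := fun h => by simp [h] at hz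
  have hs0 : 1 + z ≠ 0 := fun h => by rw [h] at hs; norm_num at hs
  have e1 : ∫ u : ℝ in Set.Ioi 0, (psiNorm u : ℂ) * Complex.exp (-z * u) =
      ∫ t in Set.Ioi (1 : ℝ), (Chebyshev.psi t : ℂ) * (t : ℂ) ^ (-((1 + z) + 1)) := by
    have := integral_comp_exp_Ioi
      (fun t : ℝ => (Chebyshev.psi t : ℂ) * (t : ℂ) ^ (-((1 + z) + 1))) 0
    rw [Real.exp_zero] at this
    rw [← this]
    refine setIntegral_congr_fun measurableSet_Ioi fun u hu => ?_
    simp only [psiNorm, Complex.real_smul]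
    rw [Complex.cpow_def_of_ne_zero (by simp),
      ← Complex.ofReal_log (Real.exp_pos u).le, Real.log_exp]
    push_cast
    rw [mul_left_comm, ← Complex.exp_add, mul_assoc, ← Complex.exp_add]
    congr 2
    ring
  have e2 : ∫ u : ℝ in Set.Ioi 0, Complex.exp (-z * u) = 1 / z := by
    rw [integral_exp_mul_complex_Ioi (by simpa using hz)]
    simp [neg_div_neg_eq]
  have e3 : (∫ u : ℝ in Set.Ioi 0, ((psiNorm u - 1 : ℝ) : ℂ) * Complex.exp (-z * u)) =
      (∫ u : ℝ in Set.Ioi 0, (psiNorm u : ℂ) * Complex.exp (-z * u)) -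
        ∫ u : ℝ in Set.Ioi 0, Complex.exp (-z * u) := by
    have hi := (integrableOn_psiNorm_sub_one_mul_exp hz).add (integrableOn_exp_neg hz)
    rw [← integral_sub _ (integrableOn_exp_neg hz)]
    · congr 1; funext u; push_cast; ring
    · refine hi.congr (Eventually.of_forall fun u => ?_)
      simp only [Pi.add_apply]; push_cast; ring
  rw [e3, e1, e2, laplaceExt, zetaAux_eq hs, LSeries_vonMangoldt_eq_integral hs]
  rw [add_sub_cancel_left]
  field_simp
  ring

/-! ### The Fejér kernel -/

/-- The Fejér kernel `2 (1 - cos (l v)) / (l v²)` at scale `l`, with value `0` at `v = 0`. -/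
noncomputable def fejer (l v : ℝ) : ℝ := 2 * (1 - Real.cos (l * v)) / (l * v ^ 2)

lemma fejer_nonneg {l : ℝ} (hl : 0 < l) (v : ℝ) : 0 ≤ fejer l v := by
  have := Real.cos_le_one (l * v)
  unfold fejer
  apply div_nonneg <;> nlinarith [sq_nonneg v]

lemma measurable_fejer (l : ℝ) : Measurable (fejer l) := by
  unfold fejer; fun_prop

lemma fejer_one_le (v : ℝ) : fejer 1 v ≤ 5 * (1 + v ^ 2)⁻¹ := by
  rcases eq_or_ne v 0 with rfl | hv
  · simp [fejer]
  have h1 := Real.one_sub_sq_div_two_le_cos (x := v)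
  have h2 := Real.neg_one_le_cos v
  have hv2 : 0 < v ^ 2 := by positivity
  rw [fejer, one_mul, one_mul, ← div_eq_mul_inv, div_le_div_iff₀ hv2 (by positivity)]
  nlinarith

lemma integrable_fejer_one : Integrable (fejer 1) := by
  refine (integrable_inv_one_add_sq.const_mul 5).mono' (measurable_fejer 1).aestronglyMeasurable
    (Eventually.of_forall fun v => ?_)
  rw [Real.norm_of_nonneg (fejer_nonneg one_pos v)]
  exact fejer_one_le v

lemma fejer_eq {l : ℝ} (hl : 0 < l) (v : ℝ) : fejer l v = l * fejer 1 (l * v) := by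
  unfold fejer
  rcases eq_or_ne v 0 with rfl | hv
  · simp
  field_simp

lemma integrable_fejer {l : ℝ} (hl : 0 < l) : Integrable (fejer l) := by
  have := (integrable_fejer_one.comp_mul_left' hl.ne').const_mul l
  exact this.congr (Eventually.of_forall fun v => (fejer_eq hl v).symm)

lemma integral_fejer {l : ℝ} (hl : 0 < l) : ∫ v, fejer l v = ∫ v, fejer 1 v := by
  simp_rw [fejer_eq hl]
  rw [integral_const_mul, Measure.integral_comp_mul_left (fejer 1), abs_of_pos (by positivity),
    smul_eq_mul, mul_inv_cancel_left₀ hl.ne']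

lemma integral_fejer_pos : 0 < ∫ v, fejer 1 v := by
  rw [integral_pos_iff_support_of_nonneg (fejer_nonneg one_pos) integrable_fejer_one]
  refine lt_of_lt_of_le ?_ (measure_mono (s := Set.Ioo 0 1) fun v hv => ?_)
  · simp
  · have h : Real.cos v < 1 := by
      have := Real.cos_lt_cos_of_nonneg_of_le_pi (x := 0) (y := v) le_rfl
        (by linarith [hv.2, Real.pi_gt_three]) hv.1
      simpa using this
    have h1 : 0 < 1 - Real.cos v := by linarith
    have h2 := hv.1
    have : 0 < fejer 1 v := by
      unfold fejer
      rw [one_mul, one_mul]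
      positivity
    exact this.ne'

/-- One half of the Fourier transform of the tent function, valid for complex frequencies. -/
lemma integral_tent_mul_exp {l : ℝ} (hl : 0 < l) {w : ℂ} (hw : w ≠ 0) :
    ∫ τ : ℝ in 0..l, (1 - (τ : ℂ) / l) * Complex.exp (τ * w) =
      Complex.exp (l * w) / (l * w ^ 2) - 1 / w - 1 / (l * w ^ 2) := by
  have hl' : (l : ℂ) ≠ 0 := by exact_mod_cast hl.ne'
  have hd (τ : ℝ) : HasDerivAt (fun τ : ℝ => (1 - (τ : ℂ) / l) * Complex.exp (τ * w) / w +
      Complex.exp (τ * w) / (l * w ^ 2)) ((1 - (τ : ℂ) / l) * Complex.exp (τ * w)) τ := by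
    have h1 : HasDerivAt (fun z : ℂ => (1 - z / l) * Complex.exp (z * w) / w +
        Complex.exp (z * w) / (l * w ^ 2)) ((1 - (τ : ℂ) / l) * Complex.exp (τ * w)) (τ : ℂ) := by
      have he : HasDerivAt (fun z : ℂ => Complex.exp (z * w)) (Complex.exp (τ * w) * (1 * w))
        (τ : ℂ) := ((hasDerivAt_id _).mul_const w).cexp
      have ht : HasDerivAt (fun z : ℂ => 1 - z / l) (-(1 / l)) (τ : ℂ) :=
        ((hasDerivAt_id _).div_const _).const_sub 1
      convert! ((ht.mul he).div_const w).add (he.div_const (l * w ^ 2)) using 1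
      field_simp
      ring
    exact h1.comp_ofReal
  rw [intervalIntegral.integral_eq_sub_of_hasDerivAt (fun τ _ => hd τ)
    (by apply Continuous.intervalIntegrable; fun_prop)]
  simp
  field_simp
  ring

/-- The Fejér kernel is the Fourier transform of the tent function `1 - |τ| / l` on `[-l, l]`. The
value `v = 0`, where the integral is `l` but `fejer l 0 = 0`, is a null set. -/
lemma integral_tent {l : ℝ} (hl : 0 < l) {v : ℝ} (hv : v ≠ 0) :
    ∫ τ : ℝ in -l..l, ((1 - |τ| / l : ℝ) : ℂ) * Complex.exp (τ * v * Complex.I) =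
      (fejer l v : ℂ) := by
  have hl' : (l : ℂ) ≠ 0 := by exact_mod_cast hl.ne'
  have hv' : (v : ℂ) ≠ 0 := by exact_mod_cast hv
  have hc : Continuous
      fun τ : ℝ => ((1 - |τ| / l : ℝ) : ℂ) * Complex.exp (τ * v * Complex.I) := by fun_prop
  rw [← intervalIntegral.integral_add_adjacent_intervals (b := 0) (hc.intervalIntegrable _ _)
    (hc.intervalIntegrable _ _)]
  have e1 : ∫ τ : ℝ in 0..l, ((1 - |τ| / l : ℝ) : ℂ) * Complex.exp (τ * v * Complex.I) =
      ∫ τ : ℝ in 0..l, (1 - (τ : ℂ) / l) * Complex.exp (τ * (v * Complex.I)) := by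
    refine intervalIntegral.integral_congr fun τ hτ => ?_
    rw [Set.uIcc_of_le hl.le] at hτ
    simp only [abs_of_nonneg hτ.1]
    push_cast
    rw [mul_assoc]
  have e2 : ∫ τ : ℝ in -l..0, ((1 - |τ| / l : ℝ) : ℂ) * Complex.exp (τ * v * Complex.I) =
      ∫ τ : ℝ in 0..l, (1 - (τ : ℂ) / l) * Complex.exp (τ * (-(v * Complex.I))) := by
    have h := intervalIntegral.integral_comp_neg (a := 0) (b := l)
      (fun τ : ℝ => ((1 - |τ| / l : ℝ) : ℂ) * Complex.exp (τ * v * Complex.I))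
    rw [neg_zero] at h
    rw [← h]
    refine intervalIntegral.integral_congr fun τ hτ => ?_
    rw [Set.uIcc_of_le hl.le] at hτ
    simp only [abs_neg, abs_of_nonneg hτ.1]
    push_cast
    congr 2
    ring
  rw [e1, e2, integral_tent_mul_exp hl (by simp [hv]), integral_tent_mul_exp hl (by simp [hv]),
    fejer]
  have hcos : Complex.exp (l * -(v * Complex.I)) + Complex.exp (l * (v * Complex.I)) =
      2 * Complex.cos (l * v) := by
    rw [Complex.cos]
    ring_nf
  push_cast
  have hsq : (v * Complex.I) ^ 2 = -(v : ℂ) ^ 2 := by rw [mul_pow, Complex.I_sq]; ring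
  rw [neg_sq, hsq]
  generalize Complex.exp (l * -(v * Complex.I)) = e₁ at *
  generalize Complex.exp (l * (v * Complex.I)) = e₂ at *
  have := Complex.I_ne_zero
  field_simp
  linear_combination (-Complex.I) * hcos

/-! ### Smoothing with the Fejér kernel -/

/-- Integrating the Laplace transform on the line `re z = ε` against the tent function gives, by
Fubini, a Fejér mean of the damped deviation `(psiNorm u - 1) e^{-εu}`. -/
lemma integral_psiNorm_exp_fejer {l ε : ℝ} (hl : 0 < l) (hε : 0 < ε) (y : ℝ) :
    ∫ u : ℝ in Set.Ioi 0, (((psiNorm u - 1) * Real.exp (-ε * u) * fejer l (y - u) : ℝ) : ℂ) =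
      ∫ τ : ℝ in -l..l, ((1 - |τ| / l : ℝ) : ℂ) * Complex.exp (τ * y * Complex.I) *
        laplaceExt (1 + ε + τ * Complex.I) := by
  have hre (τ : ℝ) : 0 < ((ε : ℂ) + τ * Complex.I).re := by simpa using hε
  have key (τ : ℝ) (u : ℝ) : ((1 - |τ| / l : ℝ) : ℂ) * Complex.exp (τ * y * Complex.I) *
      (((psiNorm u - 1 : ℝ) : ℂ) * Complex.exp (-((ε : ℂ) + τ * Complex.I) * u)) =
      (((psiNorm u - 1) * Real.exp (-ε * u) : ℝ) : ℂ) * (((1 - |τ| / l : ℝ) : ℂ) *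
        Complex.exp (τ * (y - u : ℝ) * Complex.I)) := by
    have : Complex.exp (-((ε : ℂ) + τ * Complex.I) * u) * Complex.exp (τ * y * Complex.I) =
        Complex.exp (-ε * u) * Complex.exp (τ * (y - u : ℝ) * Complex.I) := by
      rw [← Complex.exp_add, ← Complex.exp_add]
      congr 1
      push_cast
      ring
    push_cast at this ⊢
    linear_combination (1 - ((|τ| : ℝ) : ℂ) / l) * (psiNorm u - 1) * this
  have e1 (τ : ℝ) : ((1 - |τ| / l : ℝ) : ℂ) * Complex.exp (τ * y * Complex.I) *
        laplaceExt (1 + ε + τ * Complex.I) = ∫ u : ℝ in Set.Ioi 0,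
      (((psiNorm u - 1) * Real.exp (-ε * u) : ℝ) : ℂ) * (((1 - |τ| / l : ℝ) : ℂ) *
        Complex.exp (τ * (y - u : ℝ) * Complex.I)) := by
    rw [add_assoc, ← integral_psiNorm_sub_one_mul_exp (hre τ), ← integral_const_mul]
    congr 1
    funext u
    exact key τ u
  simp_rw [e1]
  rw [intervalIntegral_integral_swap]
  · refine integral_congr_ae ?_
    have hne : ∀ᵐ u : ℝ ∂(volume.restrict (Set.Ioi 0)), u ≠ y :=
      ae_restrict_of_ae (Measure.ae_ne volume y)
    filter_upwards [hne] with u hu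
    rw [intervalIntegral.integral_const_mul, integral_tent hl (sub_ne_zero.mpr hu.symm)]
    push_cast
    ring
  · have h1 : Integrable (fun τ : ℝ => ((1 - |τ| / l : ℝ) : ℂ))
        (volume.restrict (Set.uIoc (-l) l)) := by
      have : Continuous (fun τ : ℝ => ((1 - |τ| / l : ℝ) : ℂ)) := by fun_prop
      exact (this.integrableOn_uIcc).mono_set Set.uIoc_subset_uIcc
    have h2 : Integrable (fun u : ℝ => (((psiNorm u - 1) * Real.exp (-ε * u) : ℝ) : ℂ))
        (volume.restrict (Set.Ioi 0)) := by
      refine (integrableOn_psiNorm_sub_one_mul_exp (z := ε) (by simpa using hε)).congr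
        (Eventually.of_forall fun u => ?_)
      push_cast
      rfl
    have h3 := (h1.mul_prod h2).bdd_mul (f := fun z : ℝ × ℝ =>
        Complex.exp (z.1 * (y - z.2 : ℝ) * Complex.I))
      (Continuous.aestronglyMeasurable (by fun_prop)) (c := 1)
      (Eventually.of_forall fun z => by
        rw [← Complex.ofReal_mul, Complex.norm_exp_ofReal_mul_I])
    refine h3.congr (Eventually.of_forall fun z => ?_)
    simp only [Function.uncurry]
    ring

/-- Truncating `ε` at `0` makes the boundary-value function continuous on all of `ℝ × ℝ`. -/
lemma continuous_laplaceExt_max : Continuous fun q : ℝ × ℝ =>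
    laplaceExt (1 + ((max q.1 0 : ℝ) : ℂ) + q.2 * Complex.I) := by
  refine continuousOn_laplaceExt.comp_continuous (by fun_prop) fun q => ?_
  simp

lemma integrable_psiNorm_fejer {l : ℝ} (hl : 0 < l) (y : ℝ) :
    Integrable (fun u : ℝ => (psiNorm u - 1) * fejer l (y - u)) :=
  ((integrable_fejer hl).comp_sub_left y).bdd_mul
    (measurable_psiNorm.sub_const 1).aestronglyMeasurable (c := Real.log 4 + 5)
    (Eventually.of_forall abs_psiNorm_sub_one_le)

/-- The limit `ε → 0⁺` of `integral_psiNorm_exp_fejer`: on the left by dominated convergence, on the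
right by continuity of `laplaceExt` up to the line `re s = 1`. -/
lemma integral_psiNorm_fejer {l : ℝ} (hl : 0 < l) (y : ℝ) :
    ((∫ u : ℝ in Set.Ioi 0, (psiNorm u - 1) * fejer l (y - u) : ℝ) : ℂ) =
      ∫ τ : ℝ in -l..l, ((1 - |τ| / l : ℝ) : ℂ) * Complex.exp (τ * y * Complex.I) *
        laplaceExt (1 + τ * Complex.I) := by
  let R : ℝ → ℂ := fun ε => ∫ τ : ℝ in -l..l, ((1 - |τ| / l : ℝ) : ℂ) *
    Complex.exp (τ * y * Complex.I) * laplaceExt (1 + ((max ε 0 : ℝ) : ℂ) + τ * Complex.I)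
  have hR : Continuous R := by
    refine intervalIntegral.continuous_parametric_intervalIntegral_of_continuous' ?_ _ _
    have := continuous_laplaceExt_max
    simp only [Function.uncurry_def]
    fun_prop
  have hR0 : Tendsto R (nhdsWithin 0 (Set.Ioi 0)) (nhds (R 0)) :=
    (hR.tendsto 0).mono_left nhdsWithin_le_nhds
  have hL : Tendsto (fun ε : ℝ => ∫ u : ℝ in Set.Ioi 0,
      (((psiNorm u - 1) * Real.exp (-ε * u) * fejer l (y - u) : ℝ) : ℂ))
      (nhdsWithin 0 (Set.Ioi 0))
      (nhds (∫ u : ℝ in Set.Ioi 0, (((psiNorm u - 1) * fejer l (y - u) : ℝ) : ℂ))) := by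
    refine tendsto_integral_filter_of_dominated_convergence
      (fun u => ‖(psiNorm u - 1) * fejer l (y - u)‖) ?_ ?_
      (integrable_psiNorm_fejer hl y).norm.integrableOn ?_
    · refine Eventually.of_forall fun ε => Measurable.aestronglyMeasurable ?_
      have h1 := measurable_psiNorm
      have h2 := measurable_fejer l
      fun_prop
    · filter_upwards [self_mem_nhdsWithin] with ε hε
      filter_upwards [ae_restrict_mem measurableSet_Ioi] with u hu
      rw [Complex.norm_real, mul_right_comm, norm_mul]
      refine mul_le_of_le_one_right (norm_nonneg _) ?_
      rw [Real.norm_of_nonneg (Real.exp_pos _).le, Real.exp_le_one_iff]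
      have : 0 < ε * u := mul_pos hε hu
      linarith
    · refine Eventually.of_forall fun u => ?_
      refine Tendsto.mono_left ?_ nhdsWithin_le_nhds
      have : Continuous fun ε : ℝ =>
          (((psiNorm u - 1) * Real.exp (-ε * u) * fejer l (y - u) : ℝ) : ℂ) := by fun_prop
      simpa using this.tendsto 0
  have heq : (fun ε : ℝ => ∫ u : ℝ in Set.Ioi 0,
      (((psiNorm u - 1) * Real.exp (-ε * u) * fejer l (y - u) : ℝ) : ℂ))
      =ᶠ[nhdsWithin 0 (Set.Ioi 0)] R := by
    filter_upwards [self_mem_nhdsWithin] with ε hε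
    rw [integral_psiNorm_exp_fejer hl hε]
    simp only [R, max_eq_left (le_of_lt (Set.mem_Ioi.mp hε))]
  have h := tendsto_nhds_unique (hL.congr' heq) hR0
  rw [integral_complex_ofReal] at h
  rw [h]
  simp [R]

/-- The Riemann–Lebesgue lemma shows the deviation smoothed by a Fejér kernel tends to zero. -/
lemma tendsto_integral_psiNorm_sub_one_fejer {l : ℝ} (hl : 0 < l) :
    Tendsto (fun y : ℝ => ∫ u : ℝ in Set.Ioi 0, (psiNorm u - 1) * fejer l (y - u))
      atTop (nhds 0) := by
  let f : ℝ → ℂ := (Set.Ioc (-l) l).indicator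
    fun τ => ((1 - |τ| / l : ℝ) : ℂ) * laplaceExt (1 + τ * Complex.I)
  have h1 := Real.tendsto_integral_exp_smul_cocompact f
  have h2 : Tendsto (fun y : ℝ => -(2 * Real.pi)⁻¹ * y) atTop (cocompact ℝ) := by
    rw [cocompact_eq_atBot_atTop]
    exact (tendsto_id.const_mul_atTop_of_neg (by
      have := Real.pi_pos
      simp only [Left.neg_neg_iff]; positivity)).mono_right le_sup_left
  have h3 := h1.comp h2
  have h4 : Tendsto (fun y : ℝ =>
      ((∫ u : ℝ in Set.Ioi 0, (psiNorm u - 1) * fejer l (y - u) : ℝ) : ℂ)) atTop (nhds 0) := by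
    -- The factor `-(2π)⁻¹` in `h2` undoes the normalization `e^{-2πi τ w}` of Mathlib's transform.
    refine h3.congr fun y => ?_
    rw [integral_psiNorm_fejer hl, intervalIntegral.integral_of_le (by linarith),
      ← integral_indicator measurableSet_Ioc]
    refine integral_congr_ae (Eventually.of_forall fun τ => ?_)
    simp only [f, Set.indicator]
    split_ifs with hτ
    · rw [Circle.smul_def, Real.fourierChar_apply, smul_eq_mul]
      have : ((2 * Real.pi * -(τ * (-(2 * Real.pi)⁻¹ * y)) : ℝ) : ℂ) * Complex.I =
          τ * y * Complex.I := by
        have : 2 * Real.pi * -(τ * (-(2 * Real.pi)⁻¹ * y)) = τ * y := by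
          have := Real.pi_pos
          field_simp
        rw [this]; push_cast; ring
      rw [this]
      ring
    · simp
  have h5 := (Complex.continuous_re.tendsto 0).comp h4
  simpa only [Function.comp_def, Complex.ofReal_re, Complex.zero_re] using h5

lemma tendsto_integral_fejer {l : ℝ} (hl : 0 < l) :
    Tendsto (fun y : ℝ => ∫ u : ℝ in Set.Ioi 0, fejer l (y - u))
      atTop (nhds (∫ v, fejer 1 v)) := by
  have h (y : ℝ) : ∫ u : ℝ in Set.Ioi 0, fejer l (y - u) = ∫ v in Set.Iio y, fejer l v := by
    rw [← integral_indicator measurableSet_Ioi, ← integral_indicator measurableSet_Iio,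
      ← integral_sub_left_eq_self _ volume y]
    congr 1
    funext u
    simp [Set.indicator]
  simp_rw [h]
  rw [← integral_fejer hl, ← setIntegral_univ (f := fejer l)]
  have := tendsto_setIntegral_of_monotone (μ := volume) (f := fejer l) (s := fun y : ℝ => Set.Iio y)
    (fun _ => measurableSet_Iio) (fun a b hab => Set.Iio_subset_Iio hab)
    (integrable_fejer hl).integrableOn
  rwa [Set.iUnion_Iio] at this

/-- The mean of `psiNorm` against a translated Fejér kernel converges to the kernel's mass. -/
lemma tendsto_psiNorm_conv_fejer {l : ℝ} (hl : 0 < l) :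
    Tendsto (fun y : ℝ => ∫ v : ℝ, psiNorm (y - v) * fejer l v)
      atTop (nhds (∫ v, fejer 1 v)) := by
  have h := (tendsto_integral_psiNorm_sub_one_fejer hl).add (tendsto_integral_fejer hl)
  rw [zero_add] at h
  refine h.congr fun y => ?_
  rw [← integral_add (integrable_psiNorm_fejer hl y).integrableOn
    ((integrable_fejer hl).comp_sub_left y).integrableOn,
    ← integral_indicator measurableSet_Ioi, ← integral_sub_left_eq_self _ volume y]
  congr 1
  funext u
  simp only [Set.indicator, Set.mem_Ioi, sub_sub_cancel]
  split_ifs with hu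
  · ring
  · rw [psiNorm_of_nonpos (not_lt.mp hu), zero_mul]

/-! ### The Tauberian step and the prime number theorem -/

/-- `psiNorm` decreases at most exponentially, because `ψ` is monotone. -/
lemma psiNorm_mul_exp_le {a b : ℝ} (hab : a ≤ b) :
    psiNorm a * Real.exp (a - b) ≤ psiNorm b := by
  rw [psiNorm, psiNorm, mul_assoc, ← Real.exp_add, show -a + (a - b) = -b by ring]
  gcongr

lemma integrable_psiNorm_conv_fejer {l : ℝ} (hl : 0 < l) (y : ℝ) :
    Integrable (fun v : ℝ => psiNorm (y - v) * fejer l v) :=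
  (integrable_fejer hl).bdd_mul
    (measurable_psiNorm.comp (measurable_const.sub measurable_id)).aestronglyMeasurable
    (c := Real.log 4 + 4) (Eventually.of_forall fun v => by
      rw [Real.norm_of_nonneg (psiNorm_nonneg _)]; exact psiNorm_le _)

/-- The mass of the Fejér kernels concentrates at the origin as `l → ∞`. -/
lemma tendsto_fejer_mass {δ : ℝ} (hδ : 0 < δ) :
    Tendsto (fun l : ℝ => ∫ v in Set.Ioc (-δ) δ, fejer l v) atTop (nhds (∫ v, fejer 1 v)) := by
  have h : Tendsto (fun l : ℝ => ∫ v in (l * -δ)..(l * δ), fejer 1 v) atTop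
      (nhds (∫ v, fejer 1 v)) :=
    intervalIntegral_tendsto_integral integrable_fejer_one
      (tendsto_id.atTop_mul_const_of_neg (by linarith)) (tendsto_id.atTop_mul_const hδ)
  refine h.congr' ?_
  filter_upwards [eventually_gt_atTop 0] with l hl
  rw [← intervalIntegral.integral_of_le (by linarith)]
  simp_rw [fejer_eq hl]
  rw [intervalIntegral.integral_const_mul, intervalIntegral.integral_comp_mul_left _ hl.ne',
    smul_eq_mul, mul_inv_cancel_left₀ hl.ne']

/-- Monotonicity of `ψ` bounds `psiNorm y` above by a smoothed mean centred at `y + δ`. -/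
lemma psiNorm_mul_mass_le {l δ : ℝ} (hl : 0 < l) (y : ℝ) :
    psiNorm y * Real.exp (-(2 * δ)) * ∫ v in Set.Ioc (-δ) δ, fejer l v ≤
      ∫ v : ℝ, psiNorm (y + δ - v) * fejer l v := by
  have hi := integrable_psiNorm_conv_fejer hl (y + δ)
  refine le_trans ?_ (setIntegral_le_integral (s := Set.Ioc (-δ) δ) hi
    (Eventually.of_forall fun v => mul_nonneg (psiNorm_nonneg _) (fejer_nonneg hl _)))
  rw [← integral_const_mul]
  refine setIntegral_mono_on ((integrable_fejer hl).const_mul _).integrableOn hi.integrableOn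
    measurableSet_Ioc fun v hv => ?_
  refine mul_le_mul_of_nonneg_right ?_ (fejer_nonneg hl v)
  refine le_trans ?_ (psiNorm_mul_exp_le (a := y) (b := y + δ - v) (by linarith [hv.2]))
  refine mul_le_mul_of_nonneg_left (Real.exp_le_exp.mpr ?_) (psiNorm_nonneg y)
  linarith [hv.1]

/-- Monotonicity of `ψ` bounds a smoothed mean centred at `y - δ` by `psiNorm y`, up to the
contribution of the tail of the kernel. -/
lemma conv_le_psiNorm_mul_mass {l δ : ℝ} (hl : 0 < l) (y : ℝ) :
    ∫ v : ℝ, psiNorm (y - δ - v) * fejer l v ≤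
      psiNorm y * Real.exp (2 * δ) * (∫ v in Set.Ioc (-δ) δ, fejer l v) +
        (Real.log 4 + 4) * ((∫ v, fejer 1 v) - ∫ v in Set.Ioc (-δ) δ, fejer l v) := by
  have hi := integrable_psiNorm_conv_fejer hl (y - δ)
  have hk := integrable_fejer hl
  rw [← integral_fejer hl, ← integral_add_compl (s := Set.Ioc (-δ) δ) measurableSet_Ioc hk,
    add_sub_cancel_left, ← integral_add_compl (s := Set.Ioc (-δ) δ) measurableSet_Ioc hi]
  refine add_le_add ?_ ?_
  · rw [← integral_const_mul]
    refine setIntegral_mono_on hi.integrableOn (hk.const_mul _).integrableOn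
      measurableSet_Ioc fun v hv => ?_
    refine mul_le_mul_of_nonneg_right ?_ (fejer_nonneg hl v)
    have h := psiNorm_mul_exp_le (a := y - δ - v) (b := y) (by linarith [hv.1])
    have h2 : psiNorm (y - δ - v) =
        psiNorm (y - δ - v) * Real.exp (y - δ - v - y) * Real.exp (δ + v) := by
      rw [mul_assoc, ← Real.exp_add, show y - δ - v - y + (δ + v) = 0 by ring, Real.exp_zero,
        mul_one]
    rw [h2]
    refine mul_le_mul h (Real.exp_le_exp.mpr ?_) (Real.exp_pos _).le (psiNorm_nonneg y)
    linarith [hv.2]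
  · rw [← integral_const_mul]
    refine setIntegral_mono_on hi.integrableOn (hk.const_mul _).integrableOn
      measurableSet_Ioc.compl fun v hv => ?_
    exact mul_le_mul_of_nonneg_right (psiNorm_le _) (fejer_nonneg hl v)

lemma exists_pos_exp_two_mul_lt {b : ℝ} (hb : 1 < b) : ∃ δ > 0, Real.exp (2 * δ) < b := by
  refine ⟨Real.log b / 4, by have := Real.log_pos hb; positivity, ?_⟩
  rw [← Real.lt_log_iff_exp_lt (by linarith)]
  linarith [Real.log_pos hb]

/-- The prime number theorem in the form `e^{-u} ψ(e^u) → 1`. -/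
theorem tendsto_psiNorm : Tendsto psiNorm atTop (nhds 1) := by
  have hc := integral_fejer_pos
  refine tendsto_order.mpr ⟨fun a ha => ?_, fun b hb => ?_⟩
  -- In both bounds `δ` is fixed first, then `l` is taken large enough for the mass to concentrate in
  -- `(-δ, δ]`, and only then `y → ∞`.
  · obtain ⟨δ, hδ, hδa⟩ : ∃ δ > 0, a * Real.exp (2 * δ) < 1 := by
      rcases le_or_gt a 0 with h | h
      · exact ⟨1, one_pos, by nlinarith [Real.exp_pos (2 * 1)]⟩
      · obtain ⟨δ, hδ, h2⟩ := exists_pos_exp_two_mul_lt ((one_lt_inv₀ h).mpr ha)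
        refine ⟨δ, hδ, ?_⟩
        rwa [lt_inv_comm₀ (Real.exp_pos _) h, ← one_div, lt_div_iff₀ (Real.exp_pos _)] at h2
    have hm := tendsto_fejer_mass hδ
    have h1 : Tendsto (fun l : ℝ => a * Real.exp (2 * δ) * (∫ v in Set.Ioc (-δ) δ, fejer l v) +
        (Real.log 4 + 4) * ((∫ v, fejer 1 v) - ∫ v in Set.Ioc (-δ) δ, fejer l v)) atTop
        (nhds (a * Real.exp (2 * δ) * (∫ v, fejer 1 v) +
          (Real.log 4 + 4) * ((∫ v, fejer 1 v) - ∫ v, fejer 1 v))) :=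
      (hm.const_mul _).add ((tendsto_const_nhds.sub hm).const_mul _)
    obtain ⟨l, hl1, hl2, hl⟩ := ((h1.eventually_lt_const (u := ∫ v, fejer 1 v)
      (by rw [sub_self, mul_zero, add_zero]; exact mul_lt_of_lt_one_left hc hδa)).and
      ((hm.eventually_const_lt hc).and (eventually_gt_atTop 0))).exists
    have h2 := (tendsto_psiNorm_conv_fejer hl).comp
      (tendsto_atTop_add_const_right atTop (-δ) tendsto_id)
    filter_upwards [h2.eventually_const_lt hl1] with y hy
    have h3 := conv_le_psiNorm_mul_mass (δ := δ) hl y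
    simp only [Function.comp_def, id, ← sub_eq_add_neg] at hy
    have h4 := lt_of_lt_of_le hy h3
    have h5 : a * (Real.exp (2 * δ) * ∫ v in Set.Ioc (-δ) δ, fejer l v) <
        psiNorm y * (Real.exp (2 * δ) * ∫ v in Set.Ioc (-δ) δ, fejer l v) := by linarith
    exact lt_of_mul_lt_mul_right h5 (mul_pos (Real.exp_pos _) hl2).le
  · obtain ⟨δ, hδ, hδb⟩ := exists_pos_exp_two_mul_lt hb
    have hm := tendsto_fejer_mass hδ
    have h1 := hm.const_mul (b * Real.exp (-(2 * δ)))
    have h0 : 1 < b * Real.exp (-(2 * δ)) := by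
      rw [Real.exp_neg, ← div_eq_mul_inv, lt_div_iff₀ (Real.exp_pos _), one_mul]
      exact hδb
    obtain ⟨l, hl1, hl2, hl⟩ := ((h1.eventually_const_lt (u := ∫ v, fejer 1 v)
      (by nlinarith)).and ((hm.eventually_const_lt hc).and (eventually_gt_atTop 0))).exists
    have h2 := (tendsto_psiNorm_conv_fejer hl).comp
      (tendsto_atTop_add_const_right atTop δ tendsto_id)
    filter_upwards [h2.eventually_lt_const hl1] with y hy
    have h3 := psiNorm_mul_mass_le (δ := δ) hl y
    simp only [Function.comp_def, id] at hy
    have h4 := lt_of_le_of_lt h3 hy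
    have h5 : psiNorm y * (Real.exp (-(2 * δ)) * ∫ v in Set.Ioc (-δ) δ, fejer l v) <
        b * (Real.exp (-(2 * δ)) * ∫ v in Set.Ioc (-δ) δ, fejer l v) := by linarith
    exact lt_of_mul_lt_mul_right h5 (mul_pos (Real.exp_pos _) hl2).le

lemma tendsto_psi_div : Tendsto (fun x => Chebyshev.psi x / x) atTop (nhds 1) := by
  refine (tendsto_psiNorm.comp Real.tendsto_log_atTop).congr' ?_
  filter_upwards [eventually_gt_atTop 0] with x hx
  simp only [Function.comp_def, psiNorm]
  rw [Real.exp_neg, Real.exp_log hx, div_eq_mul_inv]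

lemma tendsto_theta_div : Tendsto (fun x => Chebyshev.theta x / x) atTop (nhds 1) := by
  obtain ⟨C, hC⟩ := Chebyshev.psi_sub_theta_le_mul_sqrt
  have h1 : Tendsto (fun x : ℝ => C * (Real.sqrt x)⁻¹) atTop (nhds 0) := by
    simpa using Real.tendsto_sqrt_atTop.inv_tendsto_atTop.const_mul C
  have h2 : Tendsto (fun x => (Chebyshev.psi x - Chebyshev.theta x) / x) atTop (nhds 0) := by
    refine squeeze_zero' ?_ ?_ h1
    · filter_upwards [eventually_gt_atTop 0] with x hx
      exact div_nonneg (sub_nonneg.mpr (Chebyshev.theta_le_psi x)) hx.le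
    · filter_upwards [eventually_gt_atTop 0] with x hx
      rw [div_le_iff₀ hx]
      refine (hC x).trans_eq ?_
      have : Real.sqrt x ≠ 0 := (Real.sqrt_pos.mpr hx).ne'
      nth_rw 3 [← Real.mul_self_sqrt hx.le]
      field_simp
  simpa [sub_div] using tendsto_psi_div.sub h2

/-- The prime number theorem `π(x) ~ x / log x`. -/
theorem tendsto_primeCounting :
    Tendsto (fun x : ℝ => (Nat.primeCounting ⌊x⌋₊ : ℝ) * Real.log x / x) atTop (nhds 1) := by
  have h1 : Tendsto (fun x : ℝ => (Nat.primeCounting ⌊x⌋₊ - Chebyshev.theta x / Real.log x) /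
      (x / Real.log x)) atTop (nhds 0) := by
    refine (Chebyshev.primeCounting_sub_theta_div_log_isBigO.trans_isLittleO
      ?_).tendsto_div_nhds_zero
    refine Asymptotics.isLittleO_of_tendsto' ?_ ?_
    · filter_upwards [eventually_gt_atTop 1] with x hx h
      have := Real.log_pos hx
      have : 0 < x / Real.log x := by positivity
      exact absurd h this.ne'
    · refine Real.tendsto_log_atTop.inv_tendsto_atTop.congr' ?_
      filter_upwards [eventually_gt_atTop 1] with x hx
      have := Real.log_pos hx
      simp only [Pi.inv_apply]
      field_simp
  have h2 := h1.add tendsto_theta_div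
  rw [zero_add] at h2
  refine h2.congr' ?_
  filter_upwards [eventually_gt_atTop 1] with x hx
  have := Real.log_pos hx
  field_simp
  ring

/-- Regular variation of `π` with index one. -/
lemma tendsto_primeCounting_ratio {γ : ℝ} (hγ : 0 < γ) :
    Tendsto (fun x : ℝ => (Nat.primeCounting ⌊γ * x⌋₊ : ℝ) / Nat.primeCounting ⌊x⌋₊)
      atTop (nhds γ) := by
  have h1 := tendsto_primeCounting
  have hg : Tendsto (fun x : ℝ => γ * x) atTop atTop := tendsto_id.const_mul_atTop hγ
  have h2 := h1.comp hg
  have h3 : Tendsto (fun x : ℝ => Real.log x / Real.log (γ * x)) atTop (nhds 1) := by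
    have h4 : Tendsto (fun x : ℝ => Real.log (γ * x) / Real.log x) atTop (nhds 1) := by
      have : Tendsto (fun x : ℝ => Real.log γ * (Real.log x)⁻¹ + 1) atTop (nhds 1) := by
        simpa using (Real.tendsto_log_atTop.inv_tendsto_atTop.const_mul (Real.log γ)).add_const 1
      refine this.congr' ?_
      filter_upwards [eventually_gt_atTop 1] with x hx
      have := Real.log_pos hx
      rw [Real.log_mul hγ.ne' (by linarith)]
      field_simp
    simpa using h4.inv₀ one_ne_zero
  have h5 := ((h2.div h1 one_ne_zero).mul h3).const_mul γ
  simp only [div_one, mul_one] at h5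
  refine h5.congr' ?_
  filter_upwards [eventually_gt_atTop 1, hg.eventually_gt_atTop 1] with x hx hx2
  have l1 := Real.log_pos hx
  have l2 := Real.log_pos hx2
  simp only [Pi.div_apply, Function.comp_def]
  rcases eq_or_ne (Nat.primeCounting ⌊x⌋₊ : ℝ) 0 with h0 | h0
  · simp [h0]
  field_simp

/-! ### Counting SP numbers -/

/-- In a factorization `p * a ^ 2` the prime `p` is the only one of odd multiplicity, so it is
determined by the product. -/
lemma prime_eq_of_mul_sq_eq {p q a b : ℕ} (hp : p.Prime) (hq : q.Prime) (ha : a ≠ 0) (hb : b ≠ 0)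
    (h : p * a ^ 2 = q * b ^ 2) : p = q := by
  by_contra hpq
  have h1 := congrArg (fun n => n.factorization p) h
  simp only [Nat.factorization_mul hp.ne_zero (pow_ne_zero 2 ha),
    Nat.factorization_mul hq.ne_zero (pow_ne_zero 2 hb), Nat.factorization_pow, Finsupp.add_apply,
    Finsupp.smul_apply, smul_eq_mul, hp.factorization_self, hq.factorization,
    Finsupp.single_apply, if_neg (Ne.symm hpq)] at h1
  omega

/-- The factorization `p * a ^ 2` of an SP number is unique, so SP numbers are counted by summing
over `a`. -/
lemma SPCount_eq_sum {n M : ℕ} (hM : Nat.sqrt n ≤ M) :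
    SPCount n = ∑ a ∈ Finset.Icc 2 M, Nat.primeCounting (n / a ^ 2) := by
  classical
  have hset : (Finset.range (n + 1)).filter IsSP =
      (Finset.Icc 2 M).biUnion fun a => (Nat.primesLE (n / a ^ 2)).image (· * a ^ 2) := by
    ext s
    simp only [Finset.mem_filter, Finset.mem_range, Finset.mem_biUnion, Finset.mem_Icc,
      Finset.mem_image, Nat.mem_primesLE, IsSP]
    constructor
    · rintro ⟨hs, p, a, hp, ha, rfl⟩
      have hpos : 0 < a ^ 2 := by positivity
      refine ⟨a, ⟨ha, le_trans (Nat.le_sqrt'.mpr ?_) hM⟩, p,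
        ⟨(Nat.le_div_iff_mul_le hpos).mpr (by omega), hp⟩, rfl⟩
      exact (Nat.le_mul_of_pos_left _ hp.pos).trans (by omega)
    · rintro ⟨a, ⟨ha, -⟩, p, ⟨hle, hp⟩, rfl⟩
      have hpos : 0 < a ^ 2 := by positivity
      exact ⟨Nat.lt_succ_of_le ((Nat.le_div_iff_mul_le hpos).mp hle), p, a, hp, ha, rfl⟩
  rw [SPCount]
  convert congrArg Finset.card hset
  rw [Finset.card_biUnion]
  · refine Finset.sum_congr rfl fun a ha => ?_
    have h2 := (Finset.mem_Icc.mp ha).1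
    rw [Finset.card_image_of_injective _ (mul_left_injective₀ (by positivity)),
      Nat.primesLE_card_eq_primeCounting]
  · intro a ha b hb hab
    have h2 := (Finset.mem_Icc.mp ha).1
    have h3 := (Finset.mem_Icc.mp hb).1
    refine Finset.disjoint_left.mpr fun s hs ht => hab ?_
    obtain ⟨p, hp, rfl⟩ := Finset.mem_image.mp hs
    obtain ⟨q, hq, hqs⟩ := Finset.mem_image.mp ht
    have hp := (Nat.mem_primesLE.mp hp).2
    have hq := (Nat.mem_primesLE.mp hq).2
    have hpq := prime_eq_of_mul_sq_eq hq hp (by omega) (by omega) hqs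
    subst hpq
    exact (Nat.pow_left_injective (n := 2) two_ne_zero
      (Nat.eq_of_mul_eq_mul_left hq.pos hqs)).symm

lemma SPCount_mono : Monotone SPCount := fun _ _ h => by
  classical
  exact Finset.card_le_card (Finset.filter_subset_filter _ (Finset.range_mono (by omega)))

/-- The prime number theorem makes `π` outgrow the square root. -/
lemma tendsto_sqrt_div_primeCounting :
    Tendsto (fun x : ℝ => √x / Nat.primeCounting ⌊x⌋₊) atTop (nhds 0) := by
  have h1 : Tendsto (fun x : ℝ => Real.log x / x ^ (1 / 2 : ℝ)) atTop (nhds 0) :=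
    (isLittleO_log_rpow_atTop (by norm_num)).tendsto_div_nhds_zero
  have h2 := h1.div tendsto_primeCounting one_ne_zero
  rw [zero_div] at h2
  refine h2.congr' ?_
  filter_upwards [eventually_gt_atTop 1] with x hx
  have hl := Real.log_pos hx
  have hs : 0 < √x := Real.sqrt_pos.mpr (by linarith)
  have hx2 : x = √x * √x := (Real.mul_self_sqrt (by linarith)).symm
  simp only [Pi.div_apply, ← Real.sqrt_eq_rpow]
  rcases eq_or_ne (Nat.primeCounting ⌊x⌋₊ : ℝ) 0 with h0 | h0
  · simp [h0]
  · rw [div_div_div_eq, div_eq_div_iff (by positivity) h0]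
    linear_combination Real.log x * (Nat.primeCounting ⌊x⌋₊ : ℝ) * hx2

/-- The numbers `4 p` alone make `SPCount` outgrow the square root. -/
lemma tendsto_sqrt_div_SPCount :
    Tendsto (fun j : ℕ => √(j : ℝ) / SPCount j) atTop (nhds 0) := by
  have hq : Tendsto (fun j : ℕ => (j : ℝ) / 4) atTop atTop :=
    tendsto_natCast_atTop_atTop.atTop_div_const (by norm_num)
  have h1 := (tendsto_sqrt_div_primeCounting.comp hq).const_mul 2
  rw [mul_zero] at h1
  refine squeeze_zero' (Eventually.of_forall fun j => by positivity) ?_ h1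
  filter_upwards [eventually_ge_atTop 8] with j hj
  have hf : ⌊(j : ℝ) / 4⌋₊ = j / 4 := by
    have := Nat.floor_div_natCast (j : ℝ) 4
    simpa using this
  have hpi : 0 < Nat.primeCounting (j / 4) := by
    refine lt_of_lt_of_le ?_ (Nat.monotone_primeCounting (show 2 ≤ j / 4 by omega))
    decide
  have hle : Nat.primeCounting (j / 4) ≤ SPCount j := by
    rw [SPCount_eq_sum (le_max_left (Nat.sqrt j) 2)]
    have h2 : 2 ∈ Finset.Icc 2 (max (Nat.sqrt j) 2) :=
      Finset.mem_Icc.mpr ⟨le_rfl, le_max_right _ _⟩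
    exact Finset.single_le_sum (f := fun a => Nat.primeCounting (j / a ^ 2))
      (fun _ _ => Nat.zero_le _) h2
  simp only [Function.comp_def, hf]
  have hs : 2 * √((j : ℝ) / 4) = √(j : ℝ) := by
    rw [Real.sqrt_div' _ (by norm_num), show (4 : ℝ) = 2 ^ 2 by norm_num,
      Real.sqrt_sq (by norm_num)]
    ring
  rw [← mul_div_assoc, hs]
  gcongr

lemma primeCounting_le_self (n : ℕ) : Nat.primeCounting n ≤ n := by
  rw [← Nat.primesLE_card_eq_primeCounting]
  calc (Nat.primesLE n).card ≤ (Finset.Icc 1 n).card := Finset.card_le_card fun p hp => by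
        have := Nat.mem_primesLE.mp hp
        exact Finset.mem_Icc.mpr ⟨this.2.one_lt.le, this.1⟩
    _ = n := by simp

/-- Regular variation of `π` holds uniformly for large arguments; the remaining values of `π` are
bounded. -/
lemma exists_abs_primeCounting_sub_le {γ ε : ℝ} (hγ : 0 < γ) (hγ1 : γ ≤ 1) (hε : 0 < ε) :
    ∃ X : ℝ, 0 ≤ X ∧ ∀ x : ℝ, 0 ≤ x →
      |(Nat.primeCounting ⌊γ * x⌋₊ : ℝ) - γ * Nat.primeCounting ⌊x⌋₊| ≤
        ε * Nat.primeCounting ⌊x⌋₊ + X := by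
  obtain ⟨X, hX⟩ := eventually_atTop.mp
    ((Metric.tendsto_nhds.mp (tendsto_primeCounting_ratio hγ) ε hε).and (eventually_ge_atTop 2))
  have hX2 : 2 ≤ X := (hX X le_rfl).2
  refine ⟨X, by linarith, fun x hx => ?_⟩
  rcases le_or_gt X x with h | h
  · obtain ⟨h1, h2⟩ := hX x h
    have hpi : (0 : ℝ) < Nat.primeCounting ⌊x⌋₊ := by
      have h3 : 2 ≤ ⌊x⌋₊ := Nat.le_floor (by exact_mod_cast h2)
      have h4 := Nat.monotone_primeCounting h3
      have h5 : 0 < Nat.primeCounting 2 := by decide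
      exact_mod_cast h5.trans_le h4
    rw [Real.dist_eq, div_sub' hpi.ne', abs_div, abs_of_pos hpi, div_lt_iff₀ hpi,
      mul_comm (Nat.primeCounting ⌊x⌋₊ : ℝ)] at h1
    linarith
  · have h1 : (Nat.primeCounting ⌊γ * x⌋₊ : ℝ) ≤ Nat.primeCounting ⌊x⌋₊ := by
      exact_mod_cast Nat.monotone_primeCounting (Nat.floor_mono (mul_le_of_le_one_left hx hγ1))
    have h2 : (Nat.primeCounting ⌊x⌋₊ : ℝ) ≤ x :=
      le_trans (by exact_mod_cast primeCounting_le_self _) (Nat.floor_le hx)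
    have h3 : γ * (Nat.primeCounting ⌊x⌋₊ : ℝ) ≤ Nat.primeCounting ⌊x⌋₊ :=
      mul_le_of_le_one_left (Nat.cast_nonneg _) hγ1
    have h4 : 0 ≤ γ * (Nat.primeCounting ⌊x⌋₊ : ℝ) := by positivity
    have h5 : 0 ≤ ε * (Nat.primeCounting ⌊x⌋₊ : ℝ) := by positivity
    have h6 : (0 : ℝ) ≤ Nat.primeCounting ⌊γ * x⌋₊ := Nat.cast_nonneg _
    rw [abs_le]
    constructor <;> linarith

/-- Summing the bound `hX` for `π` over `x = j / a ^ 2`, where `2 ≤ a ≤ √j`. -/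
lemma abs_SPCount_sub_le {γ ε X : ℝ} (hγ1 : γ ≤ 1) (hX0 : 0 ≤ X)
    (hX : ∀ x : ℝ, 0 ≤ x →
      |(Nat.primeCounting ⌊γ * x⌋₊ : ℝ) - γ * Nat.primeCounting ⌊x⌋₊| ≤
        ε * Nat.primeCounting ⌊x⌋₊ + X) (j : ℕ) :
    |(SPCount ⌊γ * j⌋₊ : ℝ) - γ * SPCount j| ≤ ε * SPCount j + X * √(j : ℝ) := by
  have hle : ⌊γ * (j : ℝ)⌋₊ ≤ j :=
    Nat.floor_le_of_le (mul_le_of_le_one_left (Nat.cast_nonneg j) hγ1)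
  rw [SPCount_eq_sum (Nat.sqrt_le_sqrt hle), SPCount_eq_sum (le_refl (Nat.sqrt j))]
  push_cast
  rw [Finset.mul_sum, Finset.mul_sum, ← Finset.sum_sub_distrib]
  have hterm : ∀ a ∈ Finset.Icc 2 (Nat.sqrt j),
      |(Nat.primeCounting (⌊γ * (j : ℝ)⌋₊ / a ^ 2) : ℝ) - γ * Nat.primeCounting (j / a ^ 2)| ≤
        ε * Nat.primeCounting (j / a ^ 2) + X := by
    intro a _
    have h := hX ((j : ℝ) / (a ^ 2 : ℕ)) (by positivity)
    rwa [← mul_div_assoc, Nat.floor_div_natCast, Nat.floor_div_natCast, Nat.floor_natCast] at h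
  refine (Finset.abs_sum_le_sum_abs _ _).trans ((Finset.sum_le_sum hterm).trans ?_)
  rw [Finset.sum_add_distrib, Finset.sum_const, nsmul_eq_mul, mul_comm _ X]
  gcongr
  calc ((Finset.Icc 2 (Nat.sqrt j)).card : ℝ) ≤ Nat.sqrt j := by
        rw [Nat.card_Icc]; exact_mod_cast (by omega)
    _ ≤ √(j : ℝ) := Real.nat_sqrt_le_real_sqrt

lemma SPCount_zero : SPCount 0 = 0 := by
  rw [SPCount_eq_sum (M := 0) (by simp)]
  simp

lemma eventually_SPCount_pos : ∀ᶠ j : ℕ in atTop, (0 : ℝ) < SPCount j := by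
  filter_upwards [eventually_ge_atTop 8] with j hj
  have h : 0 < SPCount 8 := by
    classical
    rw [SPCount]
    exact Finset.card_pos.mpr ⟨8, Finset.mem_filter.mpr
      ⟨by simp, 2, 2, Nat.prime_two, le_rfl, by norm_num⟩⟩
  exact_mod_cast h.trans_le (SPCount_mono hj)

/-- Regular variation of the SP counting function with index one. -/
lemma tendsto_SPCount_ratio {γ : ℝ} (hγ : 0 ≤ γ) (hγ1 : γ ≤ 1) :
    Tendsto (fun j : ℕ => (SPCount ⌊γ * j⌋₊ : ℝ) / SPCount j) atTop (nhds γ) := by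
  rcases hγ.eq_or_lt with rfl | hγ
  · simp [SPCount_zero]
  rw [Metric.tendsto_nhds]
  intro ε hε
  obtain ⟨X, hX0, hX⟩ := exists_abs_primeCounting_sub_le hγ hγ1 (half_pos hε)
  have h1 := tendsto_sqrt_div_SPCount.const_mul X
  rw [mul_zero] at h1
  filter_upwards [h1.eventually_lt_const (half_pos hε), eventually_SPCount_pos] with j hj hpos
  have h := abs_SPCount_sub_le hγ1 hX0 hX j
  rw [← mul_div_assoc, div_lt_iff₀ hpos] at hj
  rw [Real.dist_eq, div_sub' hpos.ne', abs_div, abs_of_pos hpos, div_lt_iff₀ hpos,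
    mul_comm (SPCount j : ℝ)]
  linarith

open scoped Classical in
/-- Counting in the closed interval `[α, β]` amounts to a difference of values of `SPCount`, up to
the left endpoint. -/
lemma card_SP_between (α β : ℝ) (hα : 0 ≤ α) (hαβ : α < β) (hβ : β ≤ 1) {j : ℕ} (hj : 0 < j) :
    SPCount ⌊β * j⌋₊ ≤ ((Finset.range (j + 1)).filter
        (fun s => IsSP s ∧ α ≤ (s : ℝ) / j ∧ (s : ℝ) / j ≤ β)).card + SPCount ⌊α * j⌋₊ ∧
    ((Finset.range (j + 1)).filter
        (fun s => IsSP s ∧ α ≤ (s : ℝ) / j ∧ (s : ℝ) / j ≤ β)).card + SPCount ⌊α * j⌋₊ ≤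
      SPCount ⌊β * j⌋₊ + 1 := by
  have hj0 : (0 : ℝ) < j := by exact_mod_cast hj
  have hβ0 : 0 ≤ β * j := by have := hα.trans hαβ.le; positivity
  have hα0 : 0 ≤ α * j := by positivity
  have hle : ⌊β * (j : ℝ)⌋₊ ≤ j := Nat.floor_le_of_le (mul_le_of_le_one_left hj0.le hβ)
  have hmono : ⌊α * (j : ℝ)⌋₊ ≤ ⌊β * (j : ℝ)⌋₊ := Nat.floor_mono (by gcongr)
  set A := (Finset.range (j + 1)).filter
    (fun s => IsSP s ∧ α ≤ (s : ℝ) / j ∧ (s : ℝ) / j ≤ β) with hA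
  set B := (Finset.range (⌊α * (j : ℝ)⌋₊ + 1)).filter IsSP with hB
  set C := (Finset.range (⌊β * (j : ℝ)⌋₊ + 1)).filter IsSP with hC
  have hmA : ∀ s, s ∈ A ↔ s ≤ ⌊β * (j : ℝ)⌋₊ ∧ IsSP s ∧ α * j ≤ s := fun s => by
    rw [hA, Finset.mem_filter, Finset.mem_range, le_div_iff₀ hj0, div_le_iff₀ hj0,
      Nat.le_floor_iff hβ0]
    refine ⟨fun h => ⟨h.2.2.2, h.2.1, h.2.2.1⟩, fun h => ⟨?_, h.2.1, h.2.2, h.1⟩⟩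
    have := Nat.le_floor h.1
    omega
  have hmB : ∀ s, s ∈ B ↔ s ≤ ⌊α * (j : ℝ)⌋₊ ∧ IsSP s := fun s => by simp [hB]
  have hmC : ∀ s, s ∈ C ↔ s ≤ ⌊β * (j : ℝ)⌋₊ ∧ IsSP s := fun s => by simp [hC]
  change C.card ≤ A.card + B.card ∧ A.card + B.card ≤ C.card + 1
  have hun : A ∪ B = C := by
    ext s
    rw [Finset.mem_union, hmA, hmB, hmC]
    constructor
    · rintro (h | h)
      · exact ⟨h.1, h.2.1⟩
      · exact ⟨h.1.trans hmono, h.2⟩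
    · rintro ⟨h1, h2⟩
      rcases le_total (α * j) (s : ℝ) with h | h
      · exact Or.inl ⟨h1, h2, h⟩
      · exact Or.inr ⟨Nat.le_floor h, h2⟩
  -- The two counts overlap at most in `α * j` itself.
  have hin : (A ∩ B).card ≤ 1 := by
    refine Finset.card_le_one.mpr fun s hs t ht => ?_
    rw [Finset.mem_inter, hmA, hmB, Nat.le_floor_iff hα0] at hs ht
    exact_mod_cast (hs.2.1.antisymm hs.1.2.2).trans (ht.2.1.antisymm ht.1.2.2).symm
  have := Finset.card_union_add_card_inter A B
  rw [hun] at this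
  omega

lemma tendsto_one_div_SPCount : Tendsto (fun j : ℕ => (1 : ℝ) / SPCount j) atTop (nhds 0) := by
  refine squeeze_zero' (Eventually.of_forall fun j => by positivity) ?_ tendsto_sqrt_div_SPCount
  filter_upwards [eventually_ge_atTop 1] with j hj
  gcongr
  exact Real.one_le_sqrt.mpr (by exact_mod_cast hj)

open scoped Classical in
/-- The normalized SP numbers are uniformly distributed in `[0,1]`: for any
`0 ≤ α < β ≤ 1`, the proportion of SP numbers `s ≤ j` with `s/j ∈ [α, β]`,
among all SP numbers `≤ j`, tends to `β - α`. -/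
theorem SP_equidistributed (α β : ℝ) (hα : 0 ≤ α) (hαβ : α < β) (hβ : β ≤ 1) :
    Tendsto (fun j : ℕ =>
      (((Finset.range (j + 1)).filter
          (fun s => IsSP s ∧ α ≤ (s : ℝ) / j ∧ (s : ℝ) / j ≤ β)).card : ℝ) /
        (SPCount j : ℝ))
      atTop (nhds (β - α)) := by
  have h1 := (tendsto_SPCount_ratio (hα.trans hαβ.le) hβ).sub
    (tendsto_SPCount_ratio hα (hαβ.le.trans hβ))
  have h2 := h1.add tendsto_one_div_SPCount
  rw [add_zero] at h2
  refine tendsto_of_tendsto_of_tendsto_of_le_of_le' h1 h2 ?_ ?_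
  · filter_upwards [eventually_gt_atTop 0] with j hj
    rw [← sub_div]
    gcongr
    have := (card_SP_between α β hα hαβ hβ hj).1
    rw [sub_le_iff_le_add]
    exact_mod_cast this
  · filter_upwards [eventually_gt_atTop 0] with j hj
    rw [← sub_div, ← add_div]
    gcongr
    have := (card_SP_between α β hα hαβ hβ hj).2
    rw [sub_add_eq_add_sub, le_sub_iff_add_le]
    exact_mod_cast this
end
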